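/- Let A ⊆ K be the k-subalgebra of the Koszul complex K generated by all elements z_{a,b} over all t ≥ 0 and all sequences a = (a_1, …, a_{t+1}), b = (b_1, …, b_t) of variables from {x_1, …, x_n}, and let A_t := A ∩ K_t. Then for every t ≥ 0, every Koszul cycle c ∈ ker(d_t) can be written as c = u + d_{t+1}(w) with u ∈ A_t and w ∈ K_{t+1}; that is, the Koszul homology H_*(𝔪²) is generated as a k-algebra by the homology classes of the elements z_{a,b}. -/

import Mathlib

set_option maxHeartbeats 1000000
set_option synthInstance.maxHeartbeats 400000

open scoped TensorProduct
open MvPolynomial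

noncomputable section

variable (k : Type) [Field k] (n : ℕ)

/-- The polynomial ring `S = k[x_1,…,x_n]`. -/
abbrev S := MvPolynomial (Fin n) k

/-- The space `S_1` of linear forms. -/
abbrev S1 := homogeneousSubmodule (Fin n) k 1

/-- The space `S_2` of quadratic forms. -/
abbrev S2 := homogeneousSubmodule (Fin n) k 2

/-- The ambient algebra `S ⊗ Λ(S_2)` containing all terms `K_t = S ⊗ ⋀^t S_2`
of the Koszul complex `K(𝔪², S)`; the product is `(f ⊗ ω)(g ⊗ η) = fg ⊗ ω∧η`. -/
abbrev KK := (MvPolynomial (Fin n) k) ⊗[k] ExteriorAlgebra k (S2 k n)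

variable {k n}

/-- The product of two linear forms, as an element of `S_2`. -/
def mulW (a b : S1 k n) : S2 k n :=
  ⟨(a : S k n) * (b : S k n), by
    rw [mem_homogeneousSubmodule]
    have ha := (mem_homogeneousSubmodule 1 (a : S k n)).1 a.2
    have hb := (mem_homogeneousSubmodule 1 (b : S k n)).1 b.2
    simpa using ha.mul hb⟩

/-- The variable `x_i`, as an element of `S_1`. -/
def xv (i : Fin n) : S1 k n :=
  ⟨X i, by rw [mem_homogeneousSubmodule]; exact isHomogeneous_X _ _⟩

/-- The quadratic monomial `x_i x_j`, as an element of `S_2`. -/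
def q (i j : Fin n) : S2 k n := mulW (xv i) (xv j)

variable (k n)

/-- `K_t = S ⊗ ⋀^t S_2`, as a subspace of the ambient algebra `KK`. -/
def Kt (t : ℕ) : Submodule k (KK k n) :=
  LinearMap.range (TensorProduct.map (LinearMap.id : S k n →ₗ[k] S k n)
    (Submodule.subtype (⋀[k]^t (S2 k n))))

variable {k n}

/-- The family of Koszul differentials, encoded as linear endomorphisms of the
ambient space `KK`: `D t` restricted to `K_t` is the `t`-th Koszul differential
`d_t : K_t → K_{t-1}`, i.e. `d_0 = 0` and
`d_t(f ⊗ m_1 ∧ ⋯ ∧ m_t) = Σ_j (-1)^{j-1} (f·m_j) ⊗ m_1 ∧ ⋯ ∧ m̂_j ∧ ⋯ ∧ m_t`. -/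
def IsKoszulDiff (D : ℕ → KK k n →ₗ[k] KK k n) : Prop :=
  D 0 = 0 ∧
  ∀ (t : ℕ) (f : S k n) (m : Fin (t+1) → S2 k n),
    D (t+1) (f ⊗ₜ[k] (ExteriorAlgebra.ιMulti k (t+1) m : ExteriorAlgebra k (S2 k n)))
      = ∑ j : Fin (t+1), ((-1:ℤ)^(j:ℕ)) •
          ((f * ((m j : S k n))) ⊗ₜ[k]
            (ExteriorAlgebra.ιMulti k t (fun l => m (j.succAbove l)) : ExteriorAlgebra k (S2 k n)))

/-- The cycle `z_{a,b} = Σ_{σ ∈ 𝔖_{t+1}} sgn(σ) a_{σ(t+1)} ⊗ (b_1 a_{σ(1)} ∧ ⋯ ∧ b_t a_{σ(t)})`. -/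
def zel (t : ℕ) (a : Fin (t+1) → S1 k n) (b : Fin t → S1 k n) : KK k n :=
  ∑ σ : Equiv.Perm (Fin (t+1)),
    ((Equiv.Perm.sign σ : ℤ)) •
      (((a (σ (Fin.last t)) : S k n)) ⊗ₜ[k]
        (ExteriorAlgebra.ιMulti k t (fun j => mulW (b j) (a (σ j.castSucc))) :
          ExteriorAlgebra k (S2 k n)))

/-- The cycle `Z_i` (0-indexed: `Zel i` is the paper's `Z_i` for `0 ≤ i ≤ n-1`), namely
`Z_i = Σ_{j=0}^{i} (-1)^{j} x_j ⊗ (x_0 x_i ∧ ⋯ ∧ x̂_j x_i ∧ ⋯ ∧ x_{i-1} x_i ∧ x_i²)`. -/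
def Zel (i : Fin n) : KK k n :=
  ∑ j : Fin ((i:ℕ)+1),
    ((-1:ℤ)^(j:ℕ)) •
      ((X (Fin.castLE i.isLt j) : S k n) ⊗ₜ[k]
        (ExteriorAlgebra.ιMulti k (i:ℕ)
          (fun l : Fin (i:ℕ) => q (Fin.castLE i.isLt (j.succAbove l)) i) :
            ExteriorAlgebra k (S2 k n)))

/-!
The Koszul complex `K = S ⊗ ⋀ S₂` is a Fock space: it is generated from `1` by the bosonic creation
operators `X i` (multiplication by `x_i`) and the fermionic ones `e i j` (wedging with `x_i x_j`),
with annihilation operators `P i` and `c i j`, and `d = ½ ∑ X i X j c i j`. The polarizations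
`E a b` (the action of `gl_n`) commute with `d` and preserve `A + im d`, where `A` is the algebra
generated by the `z_{a,b}`. One shows that `A + im d` contains every cycle, by induction on the
total degree and, for a fixed variable `y`, by descending induction on the weight of `y`.

Let `p` be a cycle of weight `m > 0` in `y`. The operator `∑_{l ≠ y} E l y E y l` maps `p` into
`A + im d`, because `E y l` raises the weight. Modulo a boundary and after setting `x_y` and
`e y y` to zero this operator is `m + δδ* + ∑ R_l* R_l`, which is positive definite over `ℚ`, hence
invertible on weight spaces; so `p` may be assumed to vanish under `x_y = e y y = 0`. Then `p` is
`x_y` times a cycle not involving `x_y`, modulo the acyclic ideal `(x_y², e y y)`. Expanding that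
cycle in the `e y j` and lifting `x_y e y j₁ ⋯ e y j_s` to `z_{a,b}` with `a = (j₁, …, j_s, y)` and
`b = (y, …, y)` reduces the claim to cycles of smaller degree.
-/

/-! ### Fock spaces -/

/-- The Kronecker delta with values in `K`. -/
def kron (K : Type*) [Zero K] [One K] {ι : Type*} [DecidableEq ι] (a b : ι) : K :=
  if a = b then 1 else 0

section Kron

variable {K ι : Type*} [DecidableEq ι]

theorem kron_comm [Zero K] [One K] (a b : ι) : kron K a b = kron K b a := by
  simp only [kron, eq_comm]

@[simp] theorem kron_self [Zero K] [One K] (a : ι) : kron K a a = 1 := if_pos rfl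

theorem kron_of_ne [Zero K] [One K] {a b : ι} (h : a ≠ b) : kron K a b = 0 := if_neg h

variable {U : Type*} [Fintype ι] [Semiring K] [AddCommMonoid U] [Module K U]

theorem sum_kron_smul (a : ι) (f : ι → U) : ∑ b, kron K a b • f b = f a := by
  simp [kron, ite_smul]

theorem sum_kron_smul' (a : ι) (f : ι → U) : ∑ b, kron K b a • f b = f a := by
  simp only [kron_comm _ a, sum_kron_smul]

end Kron

/-- A space with bosonic creation and annihilation operators `X i`, `P i` indexed by `ι`, fermionic
ones `e i j`, `c i j` indexed by unordered pairs (the diagonal pairs are normalized by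
`c i i (e i i v) + e i i (c i i v) = 2 v`), a cyclic vacuum vector, and the bilinear form for which
creation and annihilation operators are adjoint. The map `pr y` sets `X y` and `e y y` to zero.

The model to keep in mind is `k[x_1, …, x_n] ⊗ ⋀ (quadratic forms)`, with `P i = ∂_i` and `c i j`
the contraction with `∂_i ∂_j`. -/
structure FockSpace (ι K V : Type*) [DecidableEq ι] [Field K] [AddCommGroup V] [Module K V] where
  X : ι → V →ₗ[K] V
  P : ι → V →ₗ[K] V
  e : ι → ι → V →ₗ[K] V
  c : ι → ι → V →ₗ[K] V
  vac : V
  form : V →ₗ[K] V →ₗ[K] K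
  pr : ι → V →ₗ[K] V
  X_comm : ∀ i j v, X i (X j v) = X j (X i v)
  P_comm : ∀ i j v, P i (P j v) = P j (P i v)
  P_X : ∀ i j v, P i (X j v) = X j (P i v) + kron K i j • v
  e_X : ∀ i a b v, e a b (X i v) = X i (e a b v)
  c_X : ∀ i a b v, c a b (X i v) = X i (c a b v)
  P_e : ∀ i a b v, P i (e a b v) = e a b (P i v)
  P_c : ∀ i a b v, P i (c a b v) = c a b (P i v)
  e_anticomm : ∀ a b a' b' v, e a b (e a' b' v) = -e a' b' (e a b v)
  c_anticomm : ∀ a b a' b' v, c a b (c a' b' v) = -c a' b' (c a b v)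
  c_e : ∀ a b a' b' v, c a b (e a' b' v) =
    (kron K a a' * kron K b b' + kron K a b' * kron K b a') • v - e a' b' (c a b v)
  e_symm : ∀ a b v, e a b v = e b a v
  c_symm : ∀ a b v, c a b v = c b a v
  P_vac : ∀ i, P i vac = 0
  c_vac : ∀ a b, c a b vac = 0
  form_vac_vac : form vac vac = 1
  form_vac_X : ∀ i v, form vac (X i v) = 0
  form_vac_e : ∀ a b v, form vac (e a b v) = 0
  form_X_left : ∀ i u v, form (X i u) v = form u (P i v)
  form_e_left : ∀ a b u v, form (e a b u) v = form u (c a b v)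
  X_injective : ∀ i, Function.Injective (X i)
  pr_vac : ∀ y, pr y vac = vac
  pr_X_self : ∀ y v, pr y (X y v) = 0
  pr_X_of_ne : ∀ y i v, i ≠ y → pr y (X i v) = X i (pr y v)
  pr_e_self : ∀ y v, pr y (e y y v) = 0
  pr_e_of_ne : ∀ y a b v, ¬(a = y ∧ b = y) → pr y (e a b v) = e a b (pr y v)
  eq_top_of_closed : ∀ W : Submodule K V, vac ∈ W → (∀ i, ∀ v ∈ W, X i v ∈ W) →
    (∀ a b, ∀ v ∈ W, e a b v ∈ W) → W = ⊤

namespace FockSpace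

section Differential

variable {ι K V : Type*} [DecidableEq ι] [Field K] [AddCommGroup V] [Module K V]
  (F : FockSpace ι K V)

theorem hom_ext {U : Type*} [AddCommGroup U] [Module K U] {f g : V →ₗ[K] U}
    (vac : f F.vac = g F.vac) (X : ∀ i v, f v = g v → f (F.X i v) = g (F.X i v))
    (e : ∀ a b v, f v = g v → f (F.e a b v) = g (F.e a b v)) : f = g :=
  LinearMap.eqLocus_eq_top.1 (F.eq_top_of_closed (LinearMap.eqLocus f g) vac X e)

theorem e_e_self [CharZero K] (a b : ι) (v : V) : F.e a b (F.e a b v) = 0 := by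
  have : (2 : K) • F.e a b (F.e a b v) = 0 := by
    rw [two_smul]
    nth_rewrite 1 [F.e_anticomm a b a b v]
    simp
  simpa using this

variable [Fintype ι]

/-- The differential `½ ∑ χ i χ j X i X j c i j` with coefficients `χ`. It sends `e a b` to
`χ a χ b X a X b`, so `χ = 1` gives the Koszul differential and an indicator function `χ` restricts
it to a subset of the variables. -/
def dOn (χ : ι → K) : V →ₗ[K] V :=
  (1 / 2 : K) • ∑ i, ∑ j, (χ i * χ j) • (F.X i ∘ₗ F.X j ∘ₗ F.c i j)

/-- The Koszul differential. -/
def d : V →ₗ[K] V := F.dOn fun _ => 1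

/-- The polarization operator `x_a ∂/∂x_b`, acting as a derivation on bosons and fermions. -/
def E (a b : ι) : V →ₗ[K] V := F.X a ∘ₗ F.P b + ∑ l, F.e a l ∘ₗ F.c b l

theorem dOn_apply (χ : ι → K) (v : V) :
    F.dOn χ v = (1 / 2 : K) • ∑ i, ∑ j, (χ i * χ j) • F.X i (F.X j (F.c i j v)) := by
  simp [dOn]

theorem E_apply (a b : ι) (v : V) :
    F.E a b v = F.X a (F.P b v) + ∑ l, F.e a l (F.c b l v) := by
  simp [E]

theorem dOn_vac (χ : ι → K) : F.dOn χ F.vac = 0 := by simp [dOn_apply, F.c_vac]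

theorem dOn_X (χ : ι → K) (i : ι) (v : V) : F.dOn χ (F.X i v) = F.X i (F.dOn χ v) := by
  have h (a b : ι) (w : V) : F.X a (F.X b (F.X i w)) = F.X i (F.X a (F.X b w)) := by
    rw [F.X_comm b i, F.X_comm a i]
  simp only [dOn_apply, F.c_X, map_smul, map_sum, h]

theorem dOn_e [CharZero K] (χ : ι → K) (a b : ι) (v : V) :
    F.dOn χ (F.e a b v) = (χ a * χ b) • F.X a (F.X b v) - F.e a b (F.dOn χ v) := by
  have expand (i j : ι) : (χ i * χ j) • (kron K i a * kron K j b + kron K i b * kron K j a) •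
        F.X i (F.X j v) =
      kron K i a • kron K j b • (χ i * χ j) • F.X i (F.X j v) +
        kron K i b • kron K j a • (χ i * χ j) • F.X i (F.X j v) := by
    module
  have double : ∑ i, ∑ j, (χ i * χ j) • F.X i (F.X j (F.c i j (F.e a b v))) =
      (2 : K) • ((χ a * χ b) • F.X a (F.X b v)) -
        ∑ i, ∑ j, (χ i * χ j) • F.X i (F.X j (F.e a b (F.c i j v))) := by
    simp only [F.c_e, map_sub, map_smul, smul_sub, Finset.sum_sub_distrib, expand,
      Finset.sum_add_distrib, ← Finset.smul_sum, sum_kron_smul', two_smul]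
    rw [F.X_comm b a, mul_comm (χ b)]
  rw [dOn_apply, double, smul_sub, smul_smul]
  simp only [dOn_apply, map_smul, map_sum, F.e_X]
  norm_num

theorem c_dOn (χ : ι → K) (a b : ι) (v : V) : F.c a b (F.dOn χ v) = -F.dOn χ (F.c a b v) := by
  simp only [dOn_apply, map_smul, map_sum, F.c_X, F.c_anticomm a b, map_neg, smul_neg,
    Finset.sum_neg_distrib]

theorem P_dOn [CharZero K] (χ : ι → K) (a : ι) (v : V) :
    F.P a (F.dOn χ v) = F.dOn χ (F.P a v) + χ a • ∑ j, χ j • F.X j (F.c a j v) := by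
  have expand (i j : ι) : (χ i * χ j) • F.P a (F.X i (F.X j (F.c i j v))) =
      (χ i * χ j) • F.X i (F.X j (F.c i j (F.P a v))) +
        (kron K a j • (χ j * χ i) • F.X i (F.c j i v) +
          kron K a i • (χ i * χ j) • F.X j (F.c i j v)) := by
    simp only [F.P_X, F.P_c, map_add, map_smul, F.c_symm j i]
    module
  have double : ∑ i, ∑ j, (χ i * χ j) • F.P a (F.X i (F.X j (F.c i j v))) =
      ∑ i, ∑ j, (χ i * χ j) • F.X i (F.X j (F.c i j (F.P a v))) +
        (2 : K) • χ a • ∑ j, χ j • F.X j (F.c a j v) := by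
    simp only [expand, Finset.sum_add_distrib, sum_kron_smul, ← Finset.smul_sum, two_smul,
      mul_smul]
  rw [dOn_apply, dOn_apply]
  simp only [map_smul, map_sum, double, smul_add, smul_smul]
  congr 2
  ring

theorem dOn_dOn [CharZero K] (χ : ι → K) (v : V) : F.dOn χ (F.dOn χ v) = 0 := by
  suffices F.dOn χ ∘ₗ F.dOn χ = 0 from LinearMap.congr_fun this v
  refine F.hom_ext ?_ (fun i v h => ?_) (fun a b v h => ?_) <;>
    simp_all [dOn_vac, dOn_X, dOn_e]

theorem d_vac : F.d F.vac = 0 := F.dOn_vac _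

theorem d_X (i : ι) (v : V) : F.d (F.X i v) = F.X i (F.d v) := F.dOn_X _ _ _

theorem d_e [CharZero K] (a b : ι) (v : V) :
    F.d (F.e a b v) = F.X a (F.X b v) - F.e a b (F.d v) := by
  simp [d, dOn_e]

theorem d_d [CharZero K] (v : V) : F.d (F.d v) = 0 := F.dOn_dOn _ _

theorem P_d [CharZero K] (a : ι) (v : V) :
    F.P a (F.d v) = F.d (F.P a v) + ∑ j, F.X j (F.c a j v) := by
  simp [d, P_dOn]

theorem E_vac (a b : ι) : F.E a b F.vac = 0 := by simp [E_apply, F.c_vac, F.P_vac]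

theorem E_X (a b i : ι) (v : V) :
    F.E a b (F.X i v) = F.X i (F.E a b v) + kron K b i • F.X a v := by
  simp only [E_apply, F.P_X, F.c_X, F.e_X, map_add, map_sum, map_smul, F.X_comm i]
  abel

theorem E_e (a b i j : ι) (v : V) :
    F.E a b (F.e i j v) =
      F.e i j (F.E a b v) + kron K b i • F.e a j v + kron K b j • F.e a i v := by
  have expand (l : ι) : (kron K b i * kron K l j + kron K b j * kron K l i) • F.e a l v =
      kron K b i • kron K l j • F.e a l v + kron K b j • kron K l i • F.e a l v := by
    module
  simp only [E_apply, F.c_e, F.P_e, F.e_X, map_add, map_sum, map_smul, map_sub,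
    Finset.sum_sub_distrib, F.e_anticomm i j, Finset.sum_neg_distrib, expand,
    Finset.sum_add_distrib, ← Finset.smul_sum, sum_kron_smul']
  abel

theorem E_P (a b i : ι) (v : V) :
    F.E a b (F.P i v) = F.P i (F.E a b v) - kron K a i • F.P b v := by
  simp only [E_apply, map_add, map_sum, F.P_X, F.P_c, F.P_e, F.P_comm i b, kron_comm i a]
  abel

theorem E_c (a b i j : ι) (v : V) :
    F.E a b (F.c i j v) =
      F.c i j (F.E a b v) - kron K a i • F.c b j v - kron K a j • F.c b i v := by
  have expand (l : ι) : (kron K i a * kron K j l + kron K i l * kron K j a) • F.c b l v =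
      kron K i a • kron K j l • F.c b l v + kron K j a • kron K i l • F.c b l v := by
    module
  simp only [E_apply, map_add, map_sum, F.c_X, F.P_c, F.c_e, Finset.sum_sub_distrib, expand,
    Finset.sum_add_distrib, ← Finset.smul_sum, sum_kron_smul, F.c_anticomm i j, map_neg,
    Finset.sum_neg_distrib]
  rw [kron_comm i a, kron_comm j a]
  abel

theorem E_d [CharZero K] (a b : ι) (v : V) : F.E a b (F.d v) = F.d (F.E a b v) := by
  suffices F.E a b ∘ₗ F.d = F.d ∘ₗ F.E a b from LinearMap.congr_fun this v
  refine F.hom_ext ?_ (fun i v h => ?_) (fun i j v h => ?_) <;>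
    simp only [LinearMap.comp_apply] at *
  · simp [E_vac, d_vac]
  · simp [E_X, d_X, h]
  · simp only [d_e, map_sub, E_X, E_e, map_add, map_smul, h]
    rw [F.X_comm i a]
    module

theorem E_E (a b a' b' : ι) (v : V) :
    F.E a b (F.E a' b' v) =
      F.E a' b' (F.E a b v) + kron K b a' • F.E a b' v - kron K a b' • F.E a' b v := by
  suffices F.E a b ∘ₗ F.E a' b' =
      F.E a' b' ∘ₗ F.E a b + kron K b a' • F.E a b' - kron K a b' • F.E a' b from
    LinearMap.congr_fun this v
  refine F.hom_ext ?_ (fun i v h => ?_) (fun i j v h => ?_) <;>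
    simp only [LinearMap.comp_apply, LinearMap.sub_apply, LinearMap.add_apply,
      LinearMap.smul_apply] at *
  · simp [E_vac]
  · simp only [E_X, map_add, map_smul, h, map_sub, kron_comm b' a]
    module
  · simp only [E_e, map_add, map_smul, h, map_sub, kron_comm b' a, F.e_symm a' a]
    module

end Differential

end FockSpace

/-! ### Weights -/

theorem mem_of_sum_eigenvectors_mem {κ K V : Type*} [Field K] [AddCommGroup V] [Module K V]
    {f : Module.End K V} {W : Submodule K V} (hW : W ≤ W.comap f) {μ : κ → K}
    (hμ : Function.Injective μ) {s : Finset κ} {x : κ → V} (hx : ∀ m ∈ s, f (x m) = μ m • x m)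
    (hs : ∑ m ∈ s, x m ∈ W) : ∀ m ∈ s, x m ∈ W := by
  classical
  induction s using Finset.induction_on generalizing x with
  | empty => simp
  | insert a s ha ih =>
    have hx_s : ∀ m ∈ s, f (x m) = μ m • x m := fun m hm => hx m (Finset.mem_insert_of_mem hm)
    -- applying `f - μ a` kills the `a`-th summand and rescales the others
    have rescaled : ∑ m ∈ s, (μ m - μ a) • x m ∈ W := by
      have : ∑ m ∈ s, (μ m - μ a) • x m =
          f (∑ m ∈ insert a s, x m) - μ a • ∑ m ∈ insert a s, x m := by
        rw [map_sum, Finset.sum_congr rfl hx, Finset.smul_sum, ← Finset.sum_sub_distrib,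
          Finset.sum_insert ha]
        simp [sub_smul]
      rw [this]
      exact sub_mem (hW hs) (W.smul_mem _ hs)
    have mem_s : ∀ m ∈ s, x m ∈ W := fun m hm => by
      have hne : μ m - μ a ≠ 0 := sub_ne_zero.2 fun h => ha (hμ h ▸ hm)
      refine (W.smul_mem_iff hne).1 (ih (fun m hm => ?_) rescaled m hm)
      rw [map_smul, hx_s m hm, smul_comm]
    have mem_a : x a ∈ W := by
      rwa [Finset.sum_insert ha, W.add_mem_iff_left (sum_mem mem_s)] at hs
    exact Finset.forall_mem_insert _ _ _ |>.2 ⟨mem_a, mem_s⟩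

namespace FockSpace

section Weight

variable {ι K V : Type*} [DecidableEq ι] [Fintype ι] [Field K] [AddCommGroup V] [Module K V]
  (F : FockSpace ι K V)

/-- The operator whose eigenvalues are the degrees for the grading in which `x_a` has degree
`w a`. -/
def weightOp (w : ι → ℕ) : V →ₗ[K] V := ∑ a, (w a : K) • F.E a a

/-- The subspace of elements of degree `μ` for the grading in which `x_a` has degree `w a`. -/
def weightSpace (w : ι → ℕ) (μ : K) : Submodule K V := Module.End.eigenspace (F.weightOp w) μ

theorem weightOp_apply (w : ι → ℕ) (v : V) : F.weightOp w v = ∑ a, (w a : K) • F.E a a v := by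
  simp [weightOp]

theorem weightOp_single (y : ι) : F.weightOp (Pi.single y 1) = F.E y y := by
  simp [weightOp, Pi.single_apply]

theorem sum_weightOp_single : ∑ y, F.weightOp (Pi.single y 1) = F.weightOp 1 := by
  simp_rw [weightOp_single]
  simp [weightOp]

theorem weightOp_vac (w : ι → ℕ) : F.weightOp w F.vac = 0 := by simp [weightOp_apply, E_vac]

theorem weightOp_X (w : ι → ℕ) (i : ι) (v : V) :
    F.weightOp w (F.X i v) = F.X i (F.weightOp w v) + (w i : K) • F.X i v := by
  simp only [weightOp_apply, E_X, smul_add, Finset.sum_add_distrib,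
    smul_comm (w _ : K) (kron K _ _), sum_kron_smul', map_sum, map_smul]

theorem weightOp_e (w : ι → ℕ) (i j : ι) (v : V) :
    F.weightOp w (F.e i j v) = F.e i j (F.weightOp w v) + (w i + w j : K) • F.e i j v := by
  simp only [weightOp_apply, E_e, smul_add, Finset.sum_add_distrib,
    smul_comm (w _ : K) (kron K _ _), sum_kron_smul', map_sum, map_smul, F.e_symm j i]
  module

theorem weightOp_P (w : ι → ℕ) (i : ι) (v : V) :
    F.weightOp w (F.P i v) = F.P i (F.weightOp w v) - (w i : K) • F.P i v := by
  simp only [weightOp_apply, E_P, smul_sub, Finset.sum_sub_distrib,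
    smul_comm (w _ : K) (kron K _ _), sum_kron_smul', map_sum, map_smul]

theorem weightOp_c (w : ι → ℕ) (i j : ι) (v : V) :
    F.weightOp w (F.c i j v) = F.c i j (F.weightOp w v) - (w i + w j : K) • F.c i j v := by
  simp only [weightOp_apply, E_c, smul_sub, Finset.sum_sub_distrib,
    smul_comm (w _ : K) (kron K _ _), sum_kron_smul', map_sum, map_smul, F.c_symm j i]
  module

theorem weightOp_d [CharZero K] (w : ι → ℕ) (v : V) :
    F.weightOp w (F.d v) = F.d (F.weightOp w v) := by
  simp only [weightOp_apply, E_d, map_sum, map_smul]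

theorem weightOp_E (w : ι → ℕ) (a b : ι) (v : V) :
    F.weightOp w (F.E a b v) = F.E a b (F.weightOp w v) + (w a - w b : K) • F.E a b v := by
  have h (c : ι) : F.E c c (F.E a b v) = _ := F.E_E c c a b v
  simp only [weightOp_apply, h, smul_sub, smul_add, Finset.sum_sub_distrib,
    Finset.sum_add_distrib, smul_comm (w _ : K) (kron K _ _), sum_kron_smul', map_sum, map_smul]
  module

variable {F} {w : ι → ℕ} {μ : K} {v : V}

theorem mem_weightSpace : v ∈ F.weightSpace w μ ↔ F.weightOp w v = μ • v :=
  Module.End.mem_eigenspace_iff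

theorem X_mem_weightSpace (i : ι) (h : v ∈ F.weightSpace w μ) :
    F.X i v ∈ F.weightSpace w (μ + w i) := by
  rw [mem_weightSpace] at *
  rw [weightOp_X, h, map_smul]
  module

theorem e_mem_weightSpace (i j : ι) (h : v ∈ F.weightSpace w μ) :
    F.e i j v ∈ F.weightSpace w (μ + w i + w j) := by
  rw [mem_weightSpace] at *
  rw [weightOp_e, h, map_smul]
  module

theorem P_mem_weightSpace (i : ι) (h : v ∈ F.weightSpace w μ) :
    F.P i v ∈ F.weightSpace w (μ - w i) := by
  rw [mem_weightSpace] at *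
  rw [weightOp_P, h, map_smul]
  module

theorem c_mem_weightSpace (i j : ι) (h : v ∈ F.weightSpace w μ) :
    F.c i j v ∈ F.weightSpace w (μ - w i - w j) := by
  rw [mem_weightSpace] at *
  rw [weightOp_c, h, map_smul]
  module

theorem E_mem_weightSpace (i j : ι) (h : v ∈ F.weightSpace w μ) :
    F.E i j v ∈ F.weightSpace w (μ + w i - w j) := by
  rw [mem_weightSpace] at *
  rw [weightOp_E, h, map_smul]
  module

theorem d_mem_weightSpace [CharZero K] (h : v ∈ F.weightSpace w μ) :
    F.d v ∈ F.weightSpace w μ := by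
  rw [mem_weightSpace] at *
  rw [weightOp_d, h, map_smul]

variable (F w)

theorem vac_mem_weightSpace : F.vac ∈ F.weightSpace w 0 := by
  simp [mem_weightSpace, weightOp_vac]

theorem iSup_weightSpace_natCast : ⨆ m : ℕ, F.weightSpace w (m : K) = ⊤ := by
  refine F.eq_top_of_closed _ ?_ (fun i v hv => ?_) (fun i j v hv => ?_)
  · exact Submodule.mem_iSup_of_mem 0 (by simpa using F.vac_mem_weightSpace w)
  · induction hv using Submodule.iSup_induction' with
    | mem m x hx =>
      exact Submodule.mem_iSup_of_mem (m + w i) (by simpa using X_mem_weightSpace i hx)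
    | zero => simp
    | add x y _ _ hx hy => simpa using add_mem hx hy
  · induction hv using Submodule.iSup_induction' with
    | mem m x hx =>
      exact Submodule.mem_iSup_of_mem (m + w i + w j) (by simpa using e_mem_weightSpace i j hx)
    | zero => simp
    | add x y _ _ hx hy => simpa using add_mem hx hy

theorem weightSpace_eq_bot_of_forall_ne (h : ∀ m : ℕ, μ ≠ m) : F.weightSpace w μ = ⊥ := by
  have others : ⨆ ν, ⨆ (_ : ν ≠ μ), F.weightSpace w ν = ⊤ := by
    rw [eq_top_iff, ← F.iSup_weightSpace_natCast w]
    exact iSup_le fun m => le_iSup₂_of_le (m : K) (h m).symm le_rfl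
  have indep : Disjoint (F.weightSpace w μ) _ :=
    Module.End.eigenspaces_iSupIndep (F.weightOp w) μ
  exact disjoint_top.1 (others ▸ indep)

variable [CharZero K]

theorem weightSpace_eq_bot_of_neg {M : ℤ} (h : M < 0) : F.weightSpace w (M : K) = ⊥ :=
  F.weightSpace_eq_bot_of_forall_ne w fun m hm => by
    have : M = m := by exact_mod_cast hm
    lia

variable {F w}

theorem le_of_inf_weightSpace_le {W U : Submodule K V} (hW : W ≤ W.comap (F.weightOp w))
    (h : ∀ m : ℕ, W ⊓ F.weightSpace w m ≤ U) : W ≤ U := by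
  intro v hv
  have hv_top : v ∈ ⨆ m : ℕ, F.weightSpace w (m : K) := by simp [iSup_weightSpace_natCast]
  obtain ⟨x, hx, rfl⟩ := (Submodule.mem_iSup_iff_exists_finsupp _ _).mp hv_top
  exact sum_mem fun m hm => h m ⟨mem_of_sum_eigenvectors_mem hW Nat.cast_injective
    (fun m _ => mem_weightSpace.1 (hx m)) hv m hm, hx m⟩

end Weight

/-! ### Setting `X y` and `e y y` to zero -/

section Projection

variable {ι K V : Type*} [DecidableEq ι] [Field K] [AddCommGroup V] [Module K V]
  (F : FockSpace ι K V) {y : ι}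

theorem P_pr_self (y : ι) (v : V) : F.P y (F.pr y v) = 0 := by
  suffices F.P y ∘ₗ F.pr y = 0 from LinearMap.congr_fun this v
  refine F.hom_ext ?_ (fun i v h => ?_) (fun a b v h => ?_) <;>
    simp only [LinearMap.comp_apply, LinearMap.zero_apply] at *
  · rw [F.pr_vac, F.P_vac]
  · obtain rfl | hi := eq_or_ne i y
    · simp [F.pr_X_self]
    · simp [F.pr_X_of_ne _ _ _ hi, F.P_X, h, kron_of_ne hi.symm]
  · by_cases hab : a = y ∧ b = y
    · simp [hab, F.pr_e_self]
    · simp [F.pr_e_of_ne _ _ _ _ hab, F.P_e, h]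

theorem kron_mul_kron_eq_zero {a b : ι} (h : ¬(a = y ∧ b = y)) : kron K y a * kron K y b = 0 := by
  simp only [kron, mul_ite, mul_one, mul_zero]
  grind

theorem c_pr_self (y : ι) (v : V) : F.c y y (F.pr y v) = 0 := by
  suffices F.c y y ∘ₗ F.pr y = 0 from LinearMap.congr_fun this v
  refine F.hom_ext ?_ (fun i v h => ?_) (fun a b v h => ?_) <;>
    simp only [LinearMap.comp_apply, LinearMap.zero_apply] at *
  · rw [F.pr_vac, F.c_vac]
  · obtain rfl | hi := eq_or_ne i y
    · simp [F.pr_X_self]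
    · simp [F.pr_X_of_ne _ _ _ hi, F.c_X, h]
  · by_cases hab : a = y ∧ b = y
    · simp [hab, F.pr_e_self]
    · simp [F.pr_e_of_ne _ _ _ _ hab, F.c_e, h, kron_mul_kron_eq_zero hab,
        mul_comm (kron K y b)]

variable {F}

theorem pr_P_of_ne {i : ι} (hi : i ≠ y) (v : V) : F.pr y (F.P i v) = F.P i (F.pr y v) := by
  suffices F.pr y ∘ₗ F.P i = F.P i ∘ₗ F.pr y from LinearMap.congr_fun this v
  refine F.hom_ext ?_ (fun j v h => ?_) (fun a b v h => ?_) <;>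
    simp only [LinearMap.comp_apply] at *
  · rw [F.pr_vac, F.P_vac, map_zero]
  · obtain rfl | hj := eq_or_ne j y
    · simp [F.P_X, kron_of_ne hi, F.pr_X_self]
    · simp [F.pr_X_of_ne _ _ _ hj, F.P_X, h]
  · by_cases hab : a = y ∧ b = y
    · simp [hab, F.pr_e_self, F.P_e]
    · simp [F.pr_e_of_ne _ _ _ _ hab, F.P_e, h]

theorem pr_c_of_ne {i j : ι} (hj : j ≠ y) (v : V) : F.pr y (F.c i j v) = F.c i j (F.pr y v) := by
  suffices F.pr y ∘ₗ F.c i j = F.c i j ∘ₗ F.pr y from LinearMap.congr_fun this v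
  refine F.hom_ext ?_ (fun l v h => ?_) (fun a b v h => ?_) <;>
    simp only [LinearMap.comp_apply] at *
  · rw [F.pr_vac, F.c_vac, map_zero]
  · obtain rfl | hl := eq_or_ne l y
    · simp [F.pr_X_self, F.c_X]
    · simp [F.pr_X_of_ne _ _ _ hl, F.c_X, h]
  · by_cases hab : a = y ∧ b = y
    · simp [hab, F.c_e, kron_of_ne hj, F.pr_e_self]
    · simp [F.pr_e_of_ne _ _ _ _ hab, F.c_e, h]

theorem pr_e_of_right_ne {a b : ι} (hb : b ≠ y) (v : V) :
    F.pr y (F.e a b v) = F.e a b (F.pr y v) :=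
  F.pr_e_of_ne y a b v fun h => hb h.2

variable (F)

/-- The ideal generated by `x_y²` and `e y y`. -/
def sqIdeal (y : ι) : Submodule K V :=
  LinearMap.range (F.X y ∘ₗ F.X y) ⊔ LinearMap.range (F.e y y)

variable {F}

theorem mem_sqIdeal {v : V} :
    v ∈ F.sqIdeal y ↔ ∃ a b, F.X y (F.X y a) + F.e y y b = v := by
  simp [sqIdeal, Submodule.mem_sup]

theorem X_X_mem_sqIdeal (v : V) : F.X y (F.X y v) ∈ F.sqIdeal y :=
  Submodule.mem_sup_left ⟨v, rfl⟩

theorem e_self_mem_sqIdeal (v : V) : F.e y y v ∈ F.sqIdeal y :=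
  Submodule.mem_sup_right ⟨v, rfl⟩

theorem X_mem_sqIdeal (i : ι) {v : V} (h : v ∈ F.sqIdeal y) : F.X i v ∈ F.sqIdeal y := by
  obtain ⟨a, b, rfl⟩ := mem_sqIdeal.1 h
  refine mem_sqIdeal.2 ⟨F.X i a, F.X i b, ?_⟩
  rw [map_add, F.X_comm i, F.X_comm i, F.e_X]

theorem e_mem_sqIdeal (i j : ι) {v : V} (h : v ∈ F.sqIdeal y) : F.e i j v ∈ F.sqIdeal y := by
  obtain ⟨a, b, rfl⟩ := mem_sqIdeal.1 h
  refine mem_sqIdeal.2 ⟨F.e i j a, -F.e i j b, ?_⟩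
  rw [map_add, F.e_X, F.e_X, map_neg, F.e_anticomm y]
  simp

variable (F)

theorem sub_pr_sub_X_pr_P_mem_sqIdeal (y : ι) (v : V) :
    v - F.pr y v - F.X y (F.pr y (F.P y v)) ∈ F.sqIdeal y := by
  let remainder : V →ₗ[K] V := LinearMap.id - F.pr y - F.X y ∘ₗ F.pr y ∘ₗ F.P y
  suffices (F.sqIdeal y).comap remainder = ⊤ from (this.ge trivial : v ∈ _)
  refine F.eq_top_of_closed _ ?_ (fun i v h => ?_) (fun a b v h => ?_) <;>
    simp only [remainder, Submodule.mem_comap, LinearMap.sub_apply, LinearMap.id_apply,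
      LinearMap.comp_apply] at *
  · simp [F.pr_vac, F.P_vac]
  · obtain rfl | hi := eq_or_ne i y
    · convert add_mem (X_mem_sqIdeal i h) (X_X_mem_sqIdeal (F.pr i (F.P i v))) using 1
      simp [F.pr_X_self, F.P_X]
    · convert X_mem_sqIdeal i h using 1
      simp [F.pr_X_of_ne _ _ _ hi, F.P_X, kron_of_ne hi.symm, F.X_comm y i]
  · by_cases hab : a = y ∧ b = y
    · simpa [hab, F.pr_e_self, F.P_e] using e_self_mem_sqIdeal v
    · convert e_mem_sqIdeal a b h using 1
      simp [F.pr_e_of_ne _ _ _ _ hab, F.P_e, F.e_X]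

variable [Fintype ι]

/-- The Koszul differential in the variables other than `y`. -/
def dErase (y : ι) : V →ₗ[K] V := F.dOn fun i => 1 - kron K i y

theorem dErase_X (y i : ι) (v : V) : F.dErase y (F.X i v) = F.X i (F.dErase y v) := F.dOn_X _ _ _

variable {F} [CharZero K]

theorem exists_d_eq_of_mem_sqIdeal {v : V} (h : v ∈ F.sqIdeal y) (hd : F.d v = 0) :
    ∃ w, F.d w = v := by
  obtain ⟨a, b, rfl⟩ := mem_sqIdeal.1 h
  -- replacing `b` by `b + d a` subtracts the boundary of `e y y a`
  set b' := b + F.d a with hb'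
  have XX_b' : F.X y (F.X y b') = F.e y y (F.d b') := by
    simp only [map_add, d_X, d_e] at hd
    rw [← sub_eq_zero, ← hd]
    simp only [hb', map_add, d_d, add_zero]
    abel
  have e_b' : F.e y y b' = 0 := by
    refine F.X_injective y (F.X_injective y ?_)
    rw [← F.e_X, ← F.e_X, XX_b', F.e_e_self, map_zero, map_zero]
  refine ⟨F.e y y a, ?_⟩
  rw [hb', map_add] at e_b'
  rw [F.d_e, sub_eq_iff_eq_add, add_assoc, e_b', add_zero]

variable (F)

theorem dErase_e (y i : ι) (v : V) : F.dErase y (F.e y i v) = -F.e y i (F.dErase y v) := by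
  simp [dErase, dOn_e]

theorem P_dErase_of_ne {y a : ι} (h : a ≠ y) (v : V) :
    F.P a (F.dErase y v) =
      F.dErase y (F.P a v) + ∑ j ∈ Finset.univ.erase y, F.X j (F.c a j v) := by
  rw [dErase, P_dOn, kron_of_ne h, sub_zero, one_smul,
    ← Finset.add_sum_erase _ _ (Finset.mem_univ y)]
  simp only [kron_self, sub_self, zero_smul, zero_add]
  congr 1
  exact Finset.sum_congr rfl fun j hj => by simp [kron_of_ne (Finset.ne_of_mem_erase hj)]

theorem pr_d (y : ι) (v : V) : F.pr y (F.d v) = F.dErase y (F.pr y v) := by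
  suffices F.pr y ∘ₗ F.d = F.dErase y ∘ₗ F.pr y from LinearMap.congr_fun this v
  refine F.hom_ext ?_ (fun i v h => ?_) (fun a b v h => ?_) <;>
    simp only [LinearMap.comp_apply] at *
  · rw [d_vac, F.pr_vac, dErase, dOn_vac, map_zero]
  · obtain rfl | hi := eq_or_ne i y
    · simp [F.pr_X_self, d_X]
    · simp [F.pr_X_of_ne _ _ _ hi, d_X, dErase_X, h]
  · by_cases hab : a = y ∧ b = y
    · simp [hab, d_e, F.pr_e_self, F.pr_X_self]
    · rw [d_e, F.pr_e_of_ne _ _ _ _ hab, map_sub, F.pr_e_of_ne _ _ _ _ hab, h, dErase, dOn_e]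
      obtain rfl | ha := eq_or_ne a y
      · simp [F.pr_X_self]
      obtain rfl | hb := eq_or_ne b y
      · simp [F.pr_X_of_ne, ha, F.pr_X_self]
      · simp [F.pr_X_of_ne, ha, hb, kron_of_ne]

end Projection

/-! ### The Laplacian of a variable -/

section Laplacian

variable {ι K V : Type*} [DecidableEq ι] [Fintype ι] [Field K] [AddCommGroup V] [Module K V]
  (F : FockSpace ι K V) (y l : ι) (v : V)

/-- The part `δ = ∑_{j ≠ y} x_j c y j` of `∂d/∂x_y` that does not involve `x_y`. -/
def delta : V →ₗ[K] V := ∑ j ∈ Finset.univ.erase y, F.X j ∘ₗ F.c y j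

/-- The adjoint `δ* = ∑_{j ≠ y} e y j ∂_j` of `δ`. -/
def deltaAdj : V →ₗ[K] V := ∑ j ∈ Finset.univ.erase y, F.e y j ∘ₗ F.P j

/-- The operator `R_l = ∑_{j ≠ y} e y j c l j` induced by `E y l` after `X y = e y y = 0`. -/
def raise : V →ₗ[K] V := ∑ j ∈ Finset.univ.erase y, F.e y j ∘ₗ F.c l j

/-- The adjoint `R_l* = ∑_{j ≠ y} e l j c y j` of `R_l`. -/
def raiseAdj : V →ₗ[K] V := ∑ j ∈ Finset.univ.erase y, F.e l j ∘ₗ F.c y j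

/-- The positive definite operator `m + δδ* + ∑_{l ≠ y} R_l* R_l`. -/
def laplacian (m : K) : V →ₗ[K] V :=
  m • LinearMap.id + F.delta y ∘ₗ F.deltaAdj y +
    ∑ l ∈ Finset.univ.erase y, F.raiseAdj y l ∘ₗ F.raise y l

/-- The part `∑_{l ≠ y} E l y E y l` of the Casimir operator of `gl_n`, corrected by a boundary so
that it acts on cycles modulo `X y = e y y = 0` as `FockSpace.laplacian`. -/
def casimir : V →ₗ[K] V :=
  ∑ l ∈ Finset.univ.erase y, F.E l y ∘ₗ F.E y l - F.d ∘ₗ F.deltaAdj y ∘ₗ F.P y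

theorem delta_apply : F.delta y v = ∑ j ∈ Finset.univ.erase y, F.X j (F.c y j v) := by
  simp [delta]

theorem deltaAdj_apply : F.deltaAdj y v = ∑ j ∈ Finset.univ.erase y, F.e y j (F.P j v) := by
  simp [deltaAdj]

theorem raise_apply : F.raise y l v = ∑ j ∈ Finset.univ.erase y, F.e y j (F.c l j v) := by
  simp [raise]

theorem raiseAdj_apply : F.raiseAdj y l v = ∑ j ∈ Finset.univ.erase y, F.e l j (F.c y j v) := by
  simp [raiseAdj]

theorem laplacian_apply (m : K) :
    F.laplacian y m v = m • v + F.delta y (F.deltaAdj y v) +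
      ∑ l ∈ Finset.univ.erase y, F.raiseAdj y l (F.raise y l v) := by
  simp [laplacian]

theorem casimir_apply :
    F.casimir y v =
      ∑ l ∈ Finset.univ.erase y, F.E l y (F.E y l v) - F.d (F.deltaAdj y (F.P y v)) := by
  simp [casimir]

theorem E_apply_erase (a b : ι) :
    F.E a b v =
      F.X a (F.P b v) + (F.e a y (F.c b y v) + ∑ j ∈ Finset.univ.erase y, F.e a j (F.c b j v)) := by
  rw [E_apply, Finset.add_sum_erase _ (fun j => F.e a j (F.c b j v)) (Finset.mem_univ y)]

variable {F y} in
theorem pr_sum_e_c (a b : ι) :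
    F.pr y (∑ j ∈ Finset.univ.erase y, F.e a j (F.c b j v)) =
      ∑ j ∈ Finset.univ.erase y, F.e a j (F.c b j (F.pr y v)) := by
  rw [map_sum]
  refine Finset.sum_congr rfl fun j hj => ?_
  have hj := Finset.ne_of_mem_erase hj
  rw [pr_e_of_right_ne hj, pr_c_of_ne hj]

theorem pr_E_left : F.pr y (F.E y l v) = F.raise y l (F.pr y v) := by
  rw [E_apply_erase F y, map_add, map_add, F.pr_X_self, F.pr_e_self, pr_sum_e_c, raise_apply,
    zero_add, zero_add]

theorem pr_E_right (hl : l ≠ y) :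
    F.pr y (F.E l y v) =
      F.X l (F.pr y (F.P y v)) + F.raiseAdj y l (F.pr y v) + F.e l y (F.pr y (F.c y y v)) := by
  rw [E_apply_erase F y, map_add, map_add, F.pr_X_of_ne _ _ _ hl,
    F.pr_e_of_ne _ _ _ _ fun h => hl h.1, pr_sum_e_c, raiseAdj_apply]
  abel

theorem sum_e_c_pr_eq :
    ∑ j ∈ Finset.univ.erase y, F.e j y (F.c y j (F.pr y v)) = F.pr y (F.E y y v) := by
  rw [pr_E_left, raise_apply]
  exact Finset.sum_congr rfl fun j _ => F.e_symm j y _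

theorem pr_deltaAdj : F.pr y (F.deltaAdj y v) = F.deltaAdj y (F.pr y v) := by
  rw [deltaAdj_apply, deltaAdj_apply, map_sum]
  refine Finset.sum_congr rfl fun j hj => ?_
  have hj := Finset.ne_of_mem_erase hj
  rw [pr_e_of_right_ne hj, pr_P_of_ne hj]

theorem pr_E_E (hl : l ≠ y) :
    F.pr y (F.E l y (F.E y l v)) =
      F.X l (F.raise y l (F.pr y (F.P y v))) + F.X l (F.P l (F.pr y v)) +
        F.raiseAdj y l (F.raise y l (F.pr y v)) +
        F.e l y (F.raise y l (F.pr y (F.c y y v))) + (2 : K) • F.e l y (F.c y l (F.pr y v)) := by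
  have P_E : F.P y (F.E y l v) = F.E y l (F.P y v) + F.P l v := by simp [F.E_P]
  have c_E : F.c y y (F.E y l v) = F.E y l (F.c y y v) + (2 : K) • F.c y l v := by
    simp only [F.E_c, kron_self, one_smul, F.c_symm l y]
    module
  rw [pr_E_right _ _ _ _ hl, pr_E_left, P_E, c_E]
  simp only [map_add, pr_E_left, map_smul, pr_P_of_ne hl, pr_c_of_ne hl]
  abel

theorem delta_deltaAdj :
    F.delta y (F.deltaAdj y v) =
      ∑ l ∈ Finset.univ.erase y, F.X l (F.P l v) -
        ∑ j ∈ Finset.univ.erase y, ∑ i ∈ Finset.univ.erase y,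
          F.X j (F.e y i (F.P i (F.c y j v))) := by
  rw [delta_apply, ← Finset.sum_sub_distrib]
  refine Finset.sum_congr rfl fun j hj => ?_
  have hj' := Finset.ne_of_mem_erase hj
  have contract (i : ι) : F.X j (F.c y j (F.e y i (F.P i v))) =
      kron K j i • F.X j (F.P i v) - F.X j (F.e y i (F.P i (F.c y j v))) := by
    simp [F.c_e, kron_of_ne hj', F.P_c]
  simp only [deltaAdj_apply, map_sum, contract, Finset.sum_sub_distrib]
  simp [kron, hj']

theorem deltaAdj_delta :
    F.deltaAdj y (F.delta y v) =
      ∑ l ∈ Finset.univ.erase y, F.e l y (F.c y l v) +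
        ∑ j ∈ Finset.univ.erase y, ∑ i ∈ Finset.univ.erase y,
          F.X j (F.e y i (F.P i (F.c y j v))) := by
  rw [Finset.sum_comm, deltaAdj_apply, ← Finset.sum_add_distrib]
  refine Finset.sum_congr rfl fun i hi => ?_
  have contract (j : ι) : F.e y i (F.P i (F.X j (F.c y j v))) =
      kron K i j • F.e i y (F.c y j v) + F.X j (F.e y i (F.P i (F.c y j v))) := by
    rw [F.P_X, map_add, F.e_X, map_smul, F.e_symm i y, add_comm]
  simp only [delta_apply, map_sum, contract, Finset.sum_add_distrib]
  simp [kron, Finset.ne_of_mem_erase hi]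

variable [CharZero K]

theorem sum_e_raise_eq_zero : ∑ l ∈ Finset.univ.erase y, F.e l y (F.raise y l v) = 0 := by
  let S := ∑ l ∈ Finset.univ.erase y, ∑ j ∈ Finset.univ.erase y, F.e l y (F.e y j (F.c l j v))
  have antisymm : S = -S := by
    conv_lhs => rw [show S = _ from Finset.sum_comm]
    simp only [S, ← Finset.sum_neg_distrib]
    refine Finset.sum_congr rfl fun j _ => Finset.sum_congr rfl fun i _ => ?_
    rw [F.e_anticomm i y y j, F.c_symm i j, F.e_symm y j, F.e_symm i y]
  have : (2 : K) • S = 0 := by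
    rw [two_smul]
    nth_rewrite 1 [antisymm]
    simp
  simpa only [S, raise_apply, map_sum, smul_eq_zero, two_ne_zero, false_or] using this

theorem sum_X_raise :
    ∑ l ∈ Finset.univ.erase y, F.X l (F.raise y l v) =
      F.deltaAdj y (F.dErase y v) + F.dErase y (F.deltaAdj y v) := by
  simp only [deltaAdj_apply, raise_apply, map_sum]
  rw [Finset.sum_comm, ← Finset.sum_add_distrib]
  refine Finset.sum_congr rfl fun j hj => ?_
  rw [P_dErase_of_ne _ (Finset.ne_of_mem_erase hj), dErase_e, map_add, map_sum]
  simp only [F.e_X, F.c_symm j]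
  abel

variable {F v}

theorem dErase_pr_P (hv : F.d v = 0) : F.dErase y (F.pr y (F.P y v)) = -F.delta y (F.pr y v) := by
  have pr_P_d : F.pr y (F.d (F.P y v)) + F.pr y (∑ j, F.X j (F.c y j v)) = 0 := by
    rw [← map_add, ← P_d, hv, map_zero, map_zero]
  have pr_sum : F.pr y (∑ j, F.X j (F.c y j v)) = F.delta y (F.pr y v) := by
    rw [← Finset.add_sum_erase _ _ (Finset.mem_univ y), map_add, F.pr_X_self, zero_add, map_sum,
      delta_apply]
    refine Finset.sum_congr rfl fun j hj => ?_
    have hj := Finset.ne_of_mem_erase hj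
    rw [F.pr_X_of_ne _ _ _ hj, pr_c_of_ne hj]
  rwa [pr_sum, pr_d, add_eq_zero_iff_eq_neg] at pr_P_d

theorem pr_casimir {m : K} (hv : F.d v = 0) (hm : F.E y y v = m • v) :
    F.pr y (F.casimir y v) = F.laplacian y m (F.pr y v) := by
  have euler : ∑ l ∈ Finset.univ.erase y, F.e l y (F.c y l (F.pr y v)) = m • F.pr y v := by
    rw [sum_e_c_pr_eq, hm, map_smul]
  have pr_sum : F.pr y (∑ l ∈ Finset.univ.erase y, F.E l y (F.E y l v)) =
      F.deltaAdj y (F.dErase y (F.pr y (F.P y v))) +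
        F.dErase y (F.deltaAdj y (F.pr y (F.P y v))) +
        ∑ l ∈ Finset.univ.erase y, F.X l (F.P l (F.pr y v)) +
        ∑ l ∈ Finset.univ.erase y, F.raiseAdj y l (F.raise y l (F.pr y v)) +
        (2 : K) • m • F.pr y v := by
    rw [map_sum, Finset.sum_congr rfl fun l hl => F.pr_E_E y l v (Finset.ne_of_mem_erase hl)]
    simp only [Finset.sum_add_distrib, sum_X_raise, sum_e_raise_eq_zero, ← Finset.smul_sum, euler,
      add_zero]
  have anticomm : ∑ l ∈ Finset.univ.erase y, F.X l (F.P l (F.pr y v)) + m • F.pr y v =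
      F.delta y (F.deltaAdj y (F.pr y v)) + F.deltaAdj y (F.delta y (F.pr y v)) := by
    rw [delta_deltaAdj, deltaAdj_delta, euler]
    abel
  rw [casimir_apply, map_sub, pr_sum, pr_d, pr_deltaAdj, dErase_pr_P y hv, map_neg,
    laplacian_apply, eq_sub_iff_add_eq.2 anticomm.symm]
  module

end Laplacian

end FockSpace

/-! ### The bilinear form and its positivity on rational vectors -/

section Descent

variable {k₀ K V : Type*} [Field k₀] [Field K] [Algebra k₀ K] [AddCommGroup V] [Module K V]
  [Module k₀ V] [IsScalarTower k₀ K V]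

theorem exists_finsupp_of_mem_span {κ : Type*} (b : Module.Basis κ k₀ K) {L : Submodule k₀ V}
    {v : V} (hv : v ∈ Submodule.span K (L : Set V)) :
    ∃ l : κ →₀ L, v = l.sum fun j x => b j • (x : V) := by
  classical
  induction hv using Submodule.closure_induction with
  | zero => exact ⟨0, by simp⟩
  | add x y _ _ hx hy =>
    obtain ⟨l, rfl⟩ := hx
    obtain ⟨l', rfl⟩ := hy
    exact ⟨l + l', by rw [Finsupp.sum_add_index'] <;> simp⟩
  | smul_mem a x hx =>
    refine ⟨(b.repr a).mapRange (fun r => r • ⟨x, hx⟩) (by simp), ?_⟩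
    rw [Finsupp.sum_mapRange_index (by simp)]
    conv_lhs =>
      rw [← b.linearCombination_repr a, Finsupp.linearCombination_apply, Finsupp.sum,
        Finset.sum_smul]
    exact Finset.sum_congr rfl fun i _ => by
      dsimp only
      rw [Submodule.coe_smul_of_tower, smul_assoc, smul_comm]

theorem eq_zero_of_mem_span_of_anisotropic {L : Submodule k₀ V} {B : V →ₗ[K] V →ₗ[K] K}
    (hB : ∀ u ∈ L, ∀ v ∈ L, B u v ∈ Set.range (algebraMap k₀ K))
    (aniso : ∀ v ∈ L, B v v = 0 → v = 0) {v : V} (hv : v ∈ Submodule.span K (L : Set V))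
    (hBv : B v = 0) : v = 0 := by
  let b := Module.Basis.ofVectorSpace k₀ K
  obtain ⟨l, rfl⟩ := exists_finsupp_of_mem_span b hv
  have coord_eq_zero (j) : (l j : V) = 0 := by
    refine aniso _ (l j).2 ?_
    choose r hr using fun i => hB _ (l i).2 _ (l j).2
    have relation : ∑ i ∈ l.support, r i • b i = 0 := by
      have := LinearMap.congr_fun hBv (l j)
      simpa [Finsupp.sum, ← hr, Algebra.smul_def, mul_comm] using this
    by_cases hj : j ∈ l.support
    · rw [← hr, linearIndependent_iff'.1 b.linearIndependent _ _ relation j hj, map_zero]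
    · simp [Finsupp.notMem_support_iff.1 hj]
  simp [Finsupp.sum, coord_eq_zero]

end Descent

namespace FockSpace

section Form

variable {ι K V : Type*} [DecidableEq ι] [Field K] [AddCommGroup V] [Module K V]
  (F : FockSpace ι K V)

theorem form_c_left (i l : ι) (u v : V) : F.form (F.c i l u) v = F.form u (F.e i l v) := by
  suffices F.form ∘ₗ F.c i l = F.form.compl₂ (F.e i l) from LinearMap.congr_fun₂ this u v
  refine F.hom_ext ?_ (fun j u h => ?_) (fun a b u h => ?_) <;> ext v
  · simp [F.c_vac, F.form_vac_e]
  · have h := LinearMap.congr_fun h (F.P j v)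
    simp only [LinearMap.comp_apply, LinearMap.compl₂_apply] at h ⊢
    rw [F.c_X, F.form_X_left, h, F.form_X_left, F.P_e]
  · have h := LinearMap.congr_fun h (F.c a b v)
    simp only [LinearMap.comp_apply, LinearMap.compl₂_apply] at h ⊢
    simp [F.c_e, F.form_e_left, h, kron_comm a, kron_comm b, mul_comm (kron K l a)]

/-- The creation operators, bosonic and fermionic, as a single family. -/
def create : ι ⊕ ι × ι → V →ₗ[K] V := Sum.elim F.X fun p => F.e p.1 p.2

/-- The annihilation operators, bosonic and fermionic, as a single family. -/
def annihilate : ι ⊕ ι × ι → V →ₗ[K] V := Sum.elim F.P fun p => F.c p.1 p.2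

/-- The total degree of the particle created by `FockSpace.create`. -/
def modeDegree : ι ⊕ ι × ι → ℕ := Sum.elim (fun _ => 1) fun _ => 2

theorem modeDegree_pos {ι : Type*} (s : ι ⊕ ι × ι) : 0 < modeDegree s := by
  cases s <;> simp [modeDegree]

theorem form_create_left (s : ι ⊕ ι × ι) (u v : V) :
    F.form (F.create s u) v = F.form u (F.annihilate s v) := by
  cases s
  · exact F.form_X_left _ _ _
  · exact F.form_e_left _ _ _ _

theorem eq_top_of_create_mem {W : Submodule K V} (vac : F.vac ∈ W)
    (create : ∀ s, ∀ v ∈ W, F.create s v ∈ W) : W = ⊤ :=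
  F.eq_top_of_closed W vac (fun i => create (.inl i)) fun a b => create (.inr (a, b))

variable [Fintype ι]

theorem weightOp_one_apply (v : V) : F.weightOp 1 v = ∑ s, F.create s (F.annihilate s v) := by
  simp [weightOp_apply, E_apply, Finset.sum_add_distrib, Fintype.sum_sum_type,
    Fintype.sum_prod_type, create, annihilate]

variable {F} {v : V}

theorem create_mem_weightSpace {μ : K} (s : ι ⊕ ι × ι) (h : v ∈ F.weightSpace 1 μ) :
    F.create s v ∈ F.weightSpace 1 (μ + modeDegree s) := by
  rcases s with i | p
  · simpa [create, modeDegree] using X_mem_weightSpace i h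
  · simpa [create, modeDegree, add_assoc, one_add_one_eq_two] using e_mem_weightSpace p.1 p.2 h

theorem annihilate_mem_weightSpace {M : ℤ} (s : ι ⊕ ι × ι) (h : v ∈ F.weightSpace 1 (M : K)) :
    F.annihilate s v ∈ F.weightSpace 1 ((M - modeDegree s : ℤ) : K) := by
  rcases s with i | p
  · simpa [annihilate, modeDegree] using P_mem_weightSpace i h
  · simpa [annihilate, modeDegree, sub_sub, one_add_one_eq_two] using c_mem_weightSpace p.1 p.2 h

theorem smul_form_self {μ : K} (h : v ∈ F.weightSpace 1 μ) :
    μ * F.form v v = ∑ s, F.form (F.annihilate s v) (F.annihilate s v) := by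
  rw [← smul_eq_mul, ← LinearMap.smul_apply, ← map_smul, ← mem_weightSpace.1 h,
    weightOp_one_apply]
  simp [form_create_left]

theorem eq_zero_of_annihilate_eq_zero {μ : K} (hμ : μ ≠ 0) (h : v ∈ F.weightSpace 1 μ)
    (hv : ∀ s, F.annihilate s v = 0) : v = 0 := by
  rw [mem_weightSpace, weightOp_one_apply] at h
  simpa [hv, hμ] using h.symm

variable (F)

theorem span_vac_sup_iSup_weightSpace :
    Submodule.span K {F.vac} ⊔ ⨆ m : ℕ, F.weightSpace 1 (m + 1 : K) = ⊤ := by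
  have create_mem (s) (v : V) : F.create s v ∈ ⨆ m : ℕ, F.weightSpace 1 (m + 1 : K) := by
    have hv : v ∈ ⨆ m : ℕ, F.weightSpace 1 (m : K) := by simp [iSup_weightSpace_natCast]
    induction hv using Submodule.iSup_induction' with
    | mem m x hx =>
      refine Submodule.mem_iSup_of_mem (m + modeDegree s - 1) ?_
      rw [← Nat.cast_succ, Nat.succ_eq_add_one,
        Nat.sub_add_cancel (le_add_left (modeDegree_pos s)), Nat.cast_add]
      exact create_mem_weightSpace s hx
    | zero => simp
    | add x y _ _ hx hy => simpa using add_mem hx hy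
  exact F.eq_top_of_create_mem (Submodule.mem_sup_left (Submodule.mem_span_singleton_self _))
    fun s v _ => Submodule.mem_sup_right (create_mem s v)

variable [CharZero K]

theorem weightSpace_one_le_iSup {M : ℤ} (hM : M ≠ 0) :
    F.weightSpace 1 (M : K) ≤
      ⨆ s, (F.weightSpace 1 ((M - modeDegree s : ℤ) : K)).map (F.create s) := by
  intro v hv
  have euler : (M : K) • v = ∑ s, F.create s (F.annihilate s v) := by
    rw [← mem_weightSpace.1 hv, weightOp_one_apply]
  refine (Submodule.smul_mem_iff _ (Int.cast_ne_zero.2 hM)).1 (euler ▸ sum_mem fun s _ => ?_)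
  exact Submodule.mem_iSup_of_mem s ⟨_, annihilate_mem_weightSpace s hv, rfl⟩

theorem weightSpace_one_zero : F.weightSpace 1 (0 : K) = Submodule.span K {F.vac} := by
  have vac_le : Submodule.span K {F.vac} ≤ F.weightSpace 1 0 :=
    (Submodule.span_singleton_le_iff_mem _ _).2 (F.vac_mem_weightSpace 1)
  have disjoint : Disjoint (F.weightSpace 1 0) (⨆ m : ℕ, F.weightSpace 1 (m + 1 : K)) :=
    (Module.End.eigenspaces_iSupIndep (F.weightOp 1) 0).mono_right <|
      iSup_le fun m => le_iSup₂_of_le (m + 1 : K) (Nat.cast_add_one_ne_zero m) le_rfl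
  exact (eq_of_le_of_inf_le_of_sup_le (z := ⨆ m : ℕ, F.weightSpace 1 (m + 1 : K)) vac_le
    (by rw [disjoint.eq_bot]; exact bot_le)
    (by rw [span_vac_sup_iSup_weightSpace]; exact le_top)).symm

instance finiteDimensional_weightSpace_one (M : ℤ) :
    FiniteDimensional K (F.weightSpace 1 (M : K)) := by
  induction M using Int.strongRec (m := 0) with
  | lt M hM =>
    rw [weightSpace_eq_bot_of_neg _ _ hM]
    infer_instance
  | ge M _ ih =>
    obtain rfl | hM := eq_or_ne M 0
    · rw [Int.cast_zero, weightSpace_one_zero]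
      infer_instance
    · have (s : ι ⊕ ι × ι) : FiniteDimensional K (F.weightSpace 1 ((M - modeDegree s : ℤ) : K)) :=
        ih _ (sub_lt_self M (mod_cast modeDegree_pos s))
      exact Submodule.finiteDimensional_of_le (F.weightSpace_one_le_iSup hM)

end Form

section Rational

variable {ι K V : Type*} [DecidableEq ι] [Field K] [AddCommGroup V] [Module K V]

/-- The `ℚ`-span of the vectors obtained from the vacuum by creation operators. -/
inductive IsRational (F : FockSpace ι K V) : V → Prop
  | vac : IsRational F F.vac
  | zero : IsRational F 0
  | add {u v : V} : IsRational F u → IsRational F v → IsRational F (u + v)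
  | smul (r : ℚ) {v : V} : IsRational F v → IsRational F ((r : K) • v)
  | X (i : ι) {v : V} : IsRational F v → IsRational F (F.X i v)
  | e (a b : ι) {v : V} : IsRational F v → IsRational F (F.e a b v)

namespace IsRational

variable {F : FockSpace ι K V} {u v : V}

theorem kron_smul (h : F.IsRational v) (i j : ι) : F.IsRational (kron K i j • v) := by
  obtain rfl | hij := eq_or_ne i j
  · simpa using h
  · simpa [kron_of_ne hij] using IsRational.zero

theorem sub (hu : F.IsRational u) (hv : F.IsRational v) : F.IsRational (u - v) := by
  simpa [sub_eq_add_neg] using hu.add (hv.smul (-1))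

theorem sum {κ : Type*} {s : Finset κ} {f : κ → V} (h : ∀ i ∈ s, F.IsRational (f i)) :
    F.IsRational (∑ i ∈ s, f i) :=
  Finset.sum_induction f _ (fun _ _ => .add) .zero h

theorem create (s : ι ⊕ ι × ι) (h : F.IsRational v) : F.IsRational (F.create s v) := by
  cases s
  · exact h.X _
  · exact h.e _ _

theorem P (h : F.IsRational v) (i : ι) : F.IsRational (F.P i v) := by
  induction h with
  | vac => simpa [F.P_vac] using zero
  | zero => simpa using zero
  | add _ _ hu hv => simpa using hu.add hv
  | smul r _ h => simpa using h.smul r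
  | X j hv h => simpa [F.P_X] using (h.X j).add (hv.kron_smul i j)
  | e a b _ h => simpa [F.P_e] using h.e a b

theorem c (h : F.IsRational v) (i j : ι) : F.IsRational (F.c i j v) := by
  induction h with
  | vac => simpa [F.c_vac] using zero
  | zero => simpa using zero
  | add _ _ hu hv => simpa using hu.add hv
  | smul r _ h => simpa using h.smul r
  | X l _ h => simpa [F.c_X] using h.X l
  | e a b hv h =>
    simpa [F.c_e, add_smul, mul_smul] using
      (((hv.kron_smul j b).kron_smul i a).add ((hv.kron_smul j a).kron_smul i b)).sub (h.e a b)

theorem annihilate (s : ι ⊕ ι × ι) (h : F.IsRational v) : F.IsRational (F.annihilate s v) := by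
  cases s
  · exact h.P _
  · exact h.c _ _

variable [CharZero K]

theorem exists_form_vac_eq (h : F.IsRational v) : ∃ r : ℚ, F.form F.vac v = r := by
  induction h with
  | vac => exact ⟨1, by simp [F.form_vac_vac]⟩
  | zero => exact ⟨0, by simp⟩
  | add _ _ hu hv =>
    obtain ⟨r, hr⟩ := hu
    obtain ⟨s, hs⟩ := hv
    exact ⟨r + s, by simp [hr, hs]⟩
  | smul r _ h =>
    obtain ⟨s, hs⟩ := h
    exact ⟨r * s, by simp [hs]⟩
  | X => exact ⟨0, by simp [F.form_vac_X]⟩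
  | e => exact ⟨0, by simp [F.form_vac_e]⟩

theorem exists_form_eq (hu : F.IsRational u) (hv : F.IsRational v) :
    ∃ r : ℚ, F.form u v = r := by
  induction hu generalizing v with
  | vac => exact hv.exists_form_vac_eq
  | zero => exact ⟨0, by simp⟩
  | add _ _ hu hu' =>
    obtain ⟨r, hr⟩ := hu hv
    obtain ⟨s, hs⟩ := hu' hv
    exact ⟨r + s, by simp [hr, hs]⟩
  | smul r _ h =>
    obtain ⟨s, hs⟩ := h hv
    exact ⟨r * s, by simp [hs]⟩
  | X i _ h =>
    rw [F.form_X_left]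
    exact h (hv.P i)
  | e a b _ h =>
    rw [F.form_e_left]
    exact h (hv.c a b)

variable [Fintype ι]

theorem exists_form_self_of_weight_zero (h : F.IsRational v) (hv : v ∈ F.weightSpace 1 (0 : K)) :
    ∃ r : ℚ, 0 ≤ r ∧ F.form v v = r ∧ (r = 0 → v = 0) := by
  rw [weightSpace_one_zero] at hv
  obtain ⟨a, rfl⟩ := Submodule.mem_span_singleton.1 hv
  obtain ⟨r, hr⟩ := h.exists_form_vac_eq
  obtain rfl : a = r := by simpa [F.form_vac_vac] using hr
  exact ⟨r * r, mul_self_nonneg r, by simp [F.form_vac_vac], fun h => by simp_all⟩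

theorem exists_form_self {M : ℤ} (h : F.IsRational v) (hv : v ∈ F.weightSpace 1 (M : K)) :
    ∃ r : ℚ, 0 ≤ r ∧ F.form v v = r ∧ (r = 0 → v = 0) := by
  induction M using Int.strongRec (m := 0) generalizing v with
  | lt M hM =>
    obtain rfl : v = 0 := by simpa [weightSpace_eq_bot_of_neg _ _ hM] using hv
    exact ⟨0, le_rfl, by simp, fun _ => rfl⟩
  | ge M hM ih =>
    obtain rfl | hM0 := eq_or_ne M 0
    · exact h.exists_form_self_of_weight_zero (by simpa using hv)
    have hMK : (M : K) ≠ 0 := Int.cast_ne_zero.2 hM0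
    choose r r_nonneg form_eq eq_zero using fun s =>
      ih _ (sub_lt_self M (mod_cast modeDegree_pos s)) (h.annihilate s)
        (annihilate_mem_weightSpace s hv)
    refine ⟨(∑ s, r s) / M, ?_, ?_, fun hr => ?_⟩
    · exact div_nonneg (Finset.sum_nonneg fun s _ => r_nonneg s) (by exact_mod_cast hM)
    · have := smul_form_self hv
      simp only [form_eq] at this
      push_cast
      rw [← this, mul_div_cancel_left₀ _ hMK]
    · have sum_eq_zero : ∑ s, r s = 0 := by simpa [hM0] using hr
      rw [Finset.sum_eq_zero_iff_of_nonneg fun s _ => r_nonneg s] at sum_eq_zero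
      exact eq_zero_of_annihilate_eq_zero hMK hv fun s =>
        eq_zero s (sum_eq_zero s (Finset.mem_univ s))

end IsRational

end Rational

section Anisotropy

variable {ι K V : Type*} [DecidableEq ι] [Fintype ι] [Field K] [AddCommGroup V] [Module K V]
  {F : FockSpace ι K V} {v : V}

theorem form_delta_left (y : ι) (u v : V) : F.form (F.delta y u) v = F.form u (F.deltaAdj y v) := by
  simp [delta_apply, deltaAdj_apply, F.form_X_left, form_c_left]

theorem form_raiseAdj_left (y l : ι) (u v : V) :
    F.form (F.raiseAdj y l u) v = F.form u (F.raise y l v) := by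
  simp [raiseAdj_apply, raise_apply, F.form_e_left, form_c_left]

theorem form_laplacian_self (y : ι) (m : K) (v : V) :
    F.form (F.laplacian y m v) v = m * F.form v v + F.form (F.deltaAdj y v) (F.deltaAdj y v) +
      ∑ l ∈ Finset.univ.erase y, F.form (F.raise y l v) (F.raise y l v) := by
  simp [laplacian_apply, form_delta_left, form_raiseAdj_left]

theorem deltaAdj_mem_weightSpace_one {M : ℤ} (y : ι) (h : v ∈ F.weightSpace 1 (M : K)) :
    F.deltaAdj y v ∈ F.weightSpace 1 ((M + 1 : ℤ) : K) := by
  rw [deltaAdj_apply]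
  exact sum_mem fun j _ => by simpa using e_mem_weightSpace y j (P_mem_weightSpace j h)

theorem raise_mem_weightSpace_one {μ : K} (y l : ι) (h : v ∈ F.weightSpace 1 μ) :
    F.raise y l v ∈ F.weightSpace 1 μ := by
  rw [raise_apply]
  exact sum_mem fun j _ => by simpa using e_mem_weightSpace y j (c_mem_weightSpace l j h)

namespace IsRational

theorem deltaAdj (h : F.IsRational v) (y : ι) : F.IsRational (F.deltaAdj y v) := by
  rw [deltaAdj_apply]
  exact sum fun j _ => (h.P j).e y j

theorem raise (h : F.IsRational v) (y l : ι) : F.IsRational (F.raise y l v) := by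
  rw [raise_apply]
  exact sum fun j _ => (h.c l j).e y j

theorem laplacian (h : F.IsRational v) (y : ι) (m : ℚ) :
    F.IsRational (F.laplacian y (m : K) v) := by
  rw [laplacian_apply]
  refine ((h.smul m).add ?_).add (sum fun l _ => ?_)
  · rw [delta_apply]
    exact sum fun j _ => ((h.deltaAdj y).c y j).X j
  · rw [raiseAdj_apply]
    exact sum fun j _ => ((h.raise y l).c y j).e l j

theorem eq_zero_of_form_laplacian_self [CharZero K] {M : ℤ} {m : ℚ} (hm : 0 < m) (y : ι)
    (h : F.IsRational v) (hv : v ∈ F.weightSpace 1 (M : K))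
    (form_eq_zero : F.form (F.laplacian y (m : K) v) v = 0) : v = 0 := by
  obtain ⟨r, r_nonneg, form_v, eq_zero⟩ := h.exists_form_self hv
  obtain ⟨s, s_nonneg, form_deltaAdj, -⟩ :=
    (h.deltaAdj y).exists_form_self (deltaAdj_mem_weightSpace_one y hv)
  choose t t_nonneg form_raise using fun l =>
    (h.raise y l).exists_form_self (raise_mem_weightSpace_one y l hv)
  simp only [form_laplacian_self, form_v, form_deltaAdj, form_raise] at form_eq_zero
  have sum_eq_zero : m * r + s + ∑ l ∈ Finset.univ.erase y, t l = 0 := by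
    exact_mod_cast form_eq_zero
  have sum_nonneg := Finset.sum_nonneg fun l (_ : l ∈ Finset.univ.erase y) => t_nonneg l
  exact eq_zero (by nlinarith)

end IsRational

variable [CharZero K]

theorem weightSpace_one_le_span_isRational (M : ℤ) :
    F.weightSpace 1 (M : K) ≤
      Submodule.span K {v | F.IsRational v ∧ v ∈ F.weightSpace 1 (M : K)} := by
  induction M using Int.strongRec (m := 0) with
  | lt M hM =>
    rw [weightSpace_eq_bot_of_neg _ _ hM]
    exact bot_le
  | ge M _ ih =>
    obtain rfl | hM := eq_or_ne M 0
    · rw [Int.cast_zero, weightSpace_one_zero]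
      refine Submodule.span_mono (Set.singleton_subset_iff.2 ⟨.vac, ?_⟩)
      exact Submodule.mem_span_singleton_self _
    · refine (F.weightSpace_one_le_iSup hM).trans (iSup_le fun s => ?_)
      refine (Submodule.map_mono (ih _ (sub_lt_self M (mod_cast modeDegree_pos s)))).trans ?_
      rw [Submodule.map_span]
      refine Submodule.span_mono (Set.image_subset_iff.2 fun v hv => ⟨hv.1.create s, ?_⟩)
      simpa using create_mem_weightSpace s hv.2

theorem eq_zero_of_laplacian_eq_zero {M : ℤ} {m : ℚ} (hm : 0 < m) {y : ι}
    (hv : v ∈ F.weightSpace 1 (M : K)) (h : F.laplacian y (m : K) v = 0) : v = 0 := by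
  let _ : Module ℚ V := Module.compHom V (algebraMap ℚ K)
  have : IsScalarTower ℚ K V := .of_algebraMap_smul fun _ _ => rfl
  let rationalVectors : Submodule ℚ V :=
    { carrier := {v | F.IsRational v ∧ v ∈ F.weightSpace 1 (M : K)}
      add_mem' := fun hu hv => ⟨hu.1.add hv.1, add_mem hu.2 hv.2⟩
      zero_mem' := ⟨.zero, zero_mem _⟩
      smul_mem' := fun r v hv => ⟨hv.1.smul r, Submodule.smul_mem _ (r : K) hv.2⟩ }
  refine eq_zero_of_mem_span_of_anisotropic (L := rationalVectors)
    (B := F.form ∘ₗ F.laplacian y (m : K)) (fun u hu v hv => ?_)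
    (fun v hv => hv.1.eq_zero_of_form_laplacian_self hm y hv.2)
    (weightSpace_one_le_span_isRational M hv) (by simp [h])
  obtain ⟨r, hr⟩ := (hu.1.laplacian y m).exists_form_eq hv.1
  exact ⟨r, hr.symm⟩

end Anisotropy

/-! ### The inductive description of cycles -/

section Cycles

variable {ι K V : Type*} [DecidableEq ι] [Field K] [AddCommGroup V] [Module K V]
  (F : FockSpace ι K V)

/-- The operator of multiplication by `e y j₁ ⋯ e y jₛ`, where `l = [j₁, …, jₛ]`. -/
def wedgeProd (y : ι) (l : List ι) : Module.End K V := (l.map (F.e y)).prod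

theorem wedgeProd_concat (y j : ι) (l : List ι) (v : V) :
    F.wedgeProd y (l ++ [j]) v = F.wedgeProd y l (F.e y j v) := by
  simp [wedgeProd]

variable [Fintype ι]

theorem pr_weightOp (y : ι) (w : ι → ℕ) (v : V) :
    F.pr y (F.weightOp w v) = F.weightOp w (F.pr y v) := by
  suffices F.pr y ∘ₗ F.weightOp w = F.weightOp w ∘ₗ F.pr y from LinearMap.congr_fun this v
  refine F.hom_ext ?_ (fun i v h => ?_) (fun a b v h => ?_) <;>
    simp only [LinearMap.comp_apply] at *
  · simp [F.pr_vac, weightOp_vac]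
  · obtain rfl | hi := eq_or_ne i y
    · simp [F.pr_X_self, weightOp_X]
    · simp [F.pr_X_of_ne _ _ _ hi, weightOp_X, h]
  · by_cases hab : a = y ∧ b = y
    · simp [hab, F.pr_e_self, weightOp_e]
    · simp [F.pr_e_of_ne _ _ _ _ hab, weightOp_e, h]

variable {F} in
theorem pr_mem_weightSpace {w : ι → ℕ} {μ : K} {v : V} (y : ι) (h : v ∈ F.weightSpace w μ) :
    F.pr y v ∈ F.weightSpace w μ := by
  rw [mem_weightSpace, ← pr_weightOp, mem_weightSpace.1 h, map_smul]

theorem d_eq_dErase {y : ι} {v : V} (h : ∀ j, F.c y j v = 0) : F.d v = F.dErase y v := by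
  rw [d, dErase, dOn_apply, dOn_apply]
  congr 1
  refine Finset.sum_congr rfl fun i _ => Finset.sum_congr rfl fun j _ => ?_
  obtain rfl | hi := eq_or_ne i y
  · simp [h]
  obtain rfl | hj := eq_or_ne j y
  · simp [F.c_symm i j, h]
  · simp [kron_of_ne hi, kron_of_ne hj]

/-- The kernel of the Koszul differential. -/
def cycles : Submodule K V := LinearMap.ker F.d

/-- The cycles of total degree `N` and of degree `m` in the variable `y`. -/
def weightCycles (y : ι) (N : ℤ) (m : ℕ) : Submodule K V :=
  F.cycles ⊓ (F.weightSpace 1 (N : K) ⊓ F.weightSpace (Pi.single y 1) (m : K))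

/-- The condition on a submodule `W` that, for every cycle `p ∈ W`, the element
`x_y e y j₁ ⋯ e y jₛ p` is congruent to a cycle in `W` modulo `x_y²` and `e y y`. -/
def LiftsWedgeProds (W : Submodule K V) : Prop :=
  ∀ y l, ∀ p ∈ W ⊓ F.cycles, F.X y (F.wedgeProd y l p) ∈ W ⊓ F.cycles ⊔ F.sqIdeal y

variable {F} {W : Submodule K V} {v : V} {y : ι} {N : ℤ}

theorem mem_cycles : v ∈ F.cycles ↔ F.d v = 0 := LinearMap.mem_ker

theorem sum_e_c_eq_smul {m : K} (hc : F.c y y v = 0) (hP : F.P y v = 0)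
    (hv : v ∈ F.weightSpace (Pi.single y 1) m) :
    ∑ j ∈ Finset.univ.erase y, F.e y j (F.c y j v) = m • v := by
  rw [mem_weightSpace, weightOp_single, E_apply_erase F y, hP, hc] at hv
  simpa using hv

theorem deltaAdj_P_mem_weightSpace {m : K} (h : v ∈ F.weightSpace (Pi.single y 1) m) :
    F.deltaAdj y (F.P y v) ∈ F.weightSpace (Pi.single y 1) m := by
  rw [deltaAdj_apply]
  refine sum_mem fun j hj => ?_
  simpa [Finset.ne_of_mem_erase hj] using
    e_mem_weightSpace y j (P_mem_weightSpace j (P_mem_weightSpace y h))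

variable [CharZero K]

theorem cycles_le_comap_weightOp (w : ι → ℕ) :
    F.cycles ≤ F.cycles.comap (F.weightOp w) := fun v hv => by
  rw [Submodule.mem_comap, mem_cycles, ← weightOp_d, mem_cycles.1 hv, map_zero]

theorem E_mem_cycles (a b : ι) (h : v ∈ F.cycles) : F.E a b v ∈ F.cycles := by
  rw [mem_cycles, ← E_d, mem_cycles.1 h, map_zero]

theorem c_eq_zero_of_weight_zero (hc : F.c y y v = 0)
    (hv : v ∈ F.weightSpace (Pi.single y 1) (0 : K)) (j : ι) : F.c y j v = 0 := by
  obtain rfl | hj := eq_or_ne j y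
  · exact hc
  · have : F.c y j v ∈ F.weightSpace (Pi.single y 1) ((-1 : ℤ) : K) := by
      simpa [hj] using c_mem_weightSpace y j hv
    rwa [weightSpace_eq_bot_of_neg _ _ neg_one_lt_zero, Submodule.mem_bot] at this

theorem X_wedgeProd_mem (hW : F.LiftsWedgeProds W)
    (lower_mem : ∀ M < N, F.weightSpace 1 (M : K) ⊓ F.cycles ≤ W) {M : ℤ} (hM : M < N) {s : ℕ}
    (hv : v ∈ F.weightSpace 1 (M : K)) (hs : v ∈ F.weightSpace (Pi.single y 1) (s : K))
    (hc : F.c y y v = 0) (hP : F.P y v = 0) (hd : F.dErase y v = 0) (l : List ι) :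
    F.X y (F.wedgeProd y l v) ∈ W ⊓ F.cycles ⊔ F.sqIdeal y := by
  induction s generalizing l M v with
  | zero =>
    rw [Nat.cast_zero] at hs
    have v_mem : v ∈ F.cycles :=
      mem_cycles.2 ((F.d_eq_dErase (c_eq_zero_of_weight_zero hc hs)).trans hd)
    exact hW y l v ⟨lower_mem M hM ⟨hv, v_mem⟩, v_mem⟩
  | succ s ih =>
    have summand_mem : ∀ j ∈ Finset.univ.erase y,
        F.X y (F.wedgeProd y l (F.e y j (F.c y j v))) ∈ W ⊓ F.cycles ⊔ F.sqIdeal y := by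
      intro j hj
      rw [← wedgeProd_concat]
      refine ih (M := M - 2) (by lia) ?_ ?_ ?_ ?_ ?_ _
      · simpa [sub_sub, one_add_one_eq_two] using c_mem_weightSpace y j hv
      · simpa [Finset.ne_of_mem_erase hj] using c_mem_weightSpace y j hs
      · rw [F.c_anticomm, hc, map_zero, neg_zero]
      · rw [F.P_c, hP, map_zero]
      · rw [← neg_eq_zero, dErase, ← c_dOn, ← dErase, hd, map_zero]
    have sum_mem := sum_mem summand_mem
    simp only [← map_sum, sum_e_c_eq_smul hc hP hs, map_smul] at sum_mem
    exact (Submodule.smul_mem_iff _ (Nat.cast_ne_zero.2 s.succ_ne_zero)).1 sum_mem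

theorem weightCycles_eq_bot {m : ℕ} (h : N < m) : F.weightCycles y N m = ⊥ := by
  refine (Submodule.eq_bot_iff _).2 fun v hv => ?_
  have hN := mem_weightSpace.1 hv.2.1
  have split : F.weightOp 1 = F.weightOp (Pi.single y 1) + F.weightOp (Function.update 1 y 0) := by
    simp only [weightOp, ← Finset.sum_add_distrib, ← add_smul]
    refine Finset.sum_congr rfl fun i _ => ?_
    obtain rfl | hi := eq_or_ne i y <;> simp [*]
  have : v ∈ F.weightSpace (Function.update 1 y 0) ((N - m : ℤ) : K) := by
    rw [split, LinearMap.add_apply, mem_weightSpace.1 hv.2.2] at hN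
    rw [mem_weightSpace, eq_sub_of_add_eq' hN]
    push_cast
    module
  rwa [weightSpace_eq_bot_of_neg _ _ (by lia), Submodule.mem_bot] at this

theorem E_left_mem_weightCycles {m : ℕ} {l : ι} (hl : l ≠ y) (h : v ∈ F.weightCycles y N m) :
    F.E y l v ∈ F.weightCycles y N (m + 1) :=
  ⟨E_mem_cycles y l h.1, by simpa using E_mem_weightSpace y l h.2.1,
    by simpa [hl] using E_mem_weightSpace y l h.2.2⟩

theorem E_right_mem_weightCycles {m : ℕ} {l : ι} (hl : l ≠ y)
    (h : v ∈ F.weightCycles y N (m + 1)) : F.E l y v ∈ F.weightCycles y N m :=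
  ⟨E_mem_cycles l y h.1, by simpa using E_mem_weightSpace l y h.2.1,
    by simpa [hl] using E_mem_weightSpace l y h.2.2⟩

theorem casimir_mem_weightCycles {m : ℕ} (h : v ∈ F.weightCycles y N m) :
    F.casimir y v ∈ F.weightCycles y N m := by
  rw [casimir_apply]
  refine sub_mem (sum_mem fun l hl => ?_) ⟨mem_cycles.2 (F.d_d _), ?_, ?_⟩
  · have hl := Finset.ne_of_mem_erase hl
    exact E_right_mem_weightCycles hl (E_left_mem_weightCycles hl h)
  · have : F.P y v ∈ F.weightSpace 1 ((N - 1 : ℤ) : K) := by simpa using P_mem_weightSpace y h.2.1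
    simpa using d_mem_weightSpace (deltaAdj_mem_weightSpace_one y this)
  · exact d_mem_weightSpace (deltaAdj_P_mem_weightSpace h.2.2)

theorem exists_pr_casimir_eq {m : ℕ} (hm : 0 < m) (h : v ∈ F.weightCycles y N m) :
    ∃ u ∈ F.weightCycles y N m, F.pr y (F.casimir y u) = F.pr y v := by
  set Q := (F.weightCycles y N m).map (F.pr y)
  have pr_casimir_eq : ∀ u ∈ F.weightCycles y N m,
      F.pr y (F.casimir y u) = F.laplacian y (m : K) (F.pr y u) := fun u hu =>
    pr_casimir y (mem_cycles.1 hu.1) (F.weightOp_single y ▸ mem_weightSpace.1 hu.2.2)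
  have Q_le : Q ≤ F.weightSpace 1 (N : K) :=
    Submodule.map_le_iff_le_comap.2 fun u hu => pr_mem_weightSpace y hu.2.1
  have laplacian_mem : ∀ q ∈ Q, F.laplacian y (m : K) q ∈ Q := by
    rintro _ ⟨u, hu, rfl⟩
    exact ⟨_, casimir_mem_weightCycles hu, pr_casimir_eq u hu⟩
  have : FiniteDimensional K Q := Submodule.finiteDimensional_of_le Q_le
  have injOn : Set.InjOn (F.laplacian y (m : K)) Q := fun p hp q hq hpq => sub_eq_zero.1 <|
    eq_zero_of_laplacian_eq_zero (m := m) (y := y) (Nat.cast_pos.2 hm) (Q_le (sub_mem hp hq))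
      (by rw [Rat.cast_natCast, map_sub, hpq, sub_self])
  obtain ⟨_, ⟨u, hu, rfl⟩, laplacian_eq⟩ :=
    (LinearMap.injOn_iff_surjOn laplacian_mem).1 injOn (Submodule.mem_map_of_mem h)
  exact ⟨u, hu, (pr_casimir_eq u hu).trans laplacian_eq⟩

theorem mem_of_pr_eq_zero (d_mem : ∀ u, F.d u ∈ W) (hW : F.LiftsWedgeProds W)
    (lower_mem : ∀ M < N, F.weightSpace 1 (M : K) ⊓ F.cycles ≤ W) {m : ℕ} (hm : 0 < m)
    (h : v ∈ F.weightCycles y N m) (hpr : F.pr y v = 0) : v ∈ W := by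
  obtain ⟨m, rfl⟩ := Nat.exists_eq_succ_of_ne_zero hm.ne'
  have X_pr_P_mem : F.X y (F.pr y (F.P y v)) ∈ W ⊓ F.cycles ⊔ F.sqIdeal y := by
    refine X_wedgeProd_mem hW lower_mem (M := N - 1) (s := m) (by lia) ?_ ?_
      (c_pr_self ..) (P_pr_self ..) ?_ []
    · simpa using pr_mem_weightSpace y (P_mem_weightSpace y h.2.1)
    · simpa using pr_mem_weightSpace y (P_mem_weightSpace y h.2.2)
    · rw [dErase_pr_P y (mem_cycles.1 h.1), hpr, map_zero, neg_zero]
  have v_mem : v ∈ W ⊓ F.cycles ⊔ F.sqIdeal y := by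
    have remainder_mem := F.sub_pr_sub_X_pr_P_mem_sqIdeal y v
    rw [hpr, sub_zero] at remainder_mem
    simpa using add_mem (Submodule.mem_sup_right remainder_mem) X_pr_P_mem
  obtain ⟨x, hx, r, hr, rfl⟩ := Submodule.mem_sup.1 v_mem
  have d_r : F.d r = 0 := by simpa [mem_cycles.1 hx.2] using mem_cycles.1 h.1
  obtain ⟨u, rfl⟩ := exists_d_eq_of_mem_sqIdeal hr d_r
  exact add_mem hx.1 (d_mem u)

theorem weightCycles_le (d_mem : ∀ u, F.d u ∈ W) (E_mem : ∀ a b, ∀ v ∈ W, F.E a b v ∈ W)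
    (hW : F.LiftsWedgeProds W)
    (lower_mem : ∀ M < N, F.weightSpace 1 (M : K) ⊓ F.cycles ≤ W) {m : ℕ} (hm : 0 < m) :
    F.weightCycles y N m ≤ W := by
  obtain ⟨t, ht⟩ : ∃ t : ℕ, N < m + t := ⟨(N + 1).toNat, by lia⟩
  induction t generalizing m with
  | zero => exact (weightCycles_eq_bot (by simpa using ht)).trans_le bot_le
  | succ t ih =>
    intro v hv
    obtain ⟨u, hu, hpr⟩ := exists_pr_casimir_eq hm hv
    have casimir_mem : F.casimir y u ∈ W := by
      rw [casimir_apply]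
      refine sub_mem (sum_mem fun l hl => E_mem _ _ _ ?_) (d_mem _)
      exact ih m.succ_pos (by push_cast at ht ⊢; lia)
        (E_left_mem_weightCycles (Finset.ne_of_mem_erase hl) hu)
    have sub_mem_W : v - F.casimir y u ∈ W :=
      mem_of_pr_eq_zero d_mem hW lower_mem hm (sub_mem hv (casimir_mem_weightCycles hu))
        (by rw [map_sub, hpr, sub_self])
    simpa using add_mem sub_mem_W casimir_mem

theorem weightSpace_inf_cycles_le (vac_mem : F.vac ∈ W) (d_mem : ∀ u, F.d u ∈ W)
    (E_mem : ∀ a b, ∀ v ∈ W, F.E a b v ∈ W) (hW : F.LiftsWedgeProds W) (N : ℤ) :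
    F.weightSpace 1 (N : K) ⊓ F.cycles ≤ W := by
  induction N using Int.strongRec (m := 0) with
  | lt N hN => simp [weightSpace_eq_bot_of_neg _ _ hN]
  | ge N _ lower_mem =>
    obtain rfl | hN := eq_or_ne N 0
    · rw [Int.cast_zero, weightSpace_one_zero]
      exact inf_le_left.trans ((Submodule.span_singleton_le_iff_mem _ _).2 vac_mem)
    have weightOp_mem (y : ι) : F.weightSpace 1 (N : K) ⊓ F.cycles ≤
        W.comap (F.weightOp (Pi.single y 1)) := by
      refine le_of_inf_weightSpace_le (F := F) (w := Pi.single y 1) (fun v hv => ⟨?_, ?_⟩)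
        fun m v hv => ?_
      · simpa [weightOp_single] using E_mem_weightSpace y y hv.1
      · exact cycles_le_comap_weightOp _ hv.2
      · rw [Submodule.mem_comap, mem_weightSpace.1 hv.2]
        obtain rfl | hm := m.eq_zero_or_pos
        · simp
        · exact W.smul_mem _
            (weightCycles_le d_mem E_mem hW lower_mem hm ⟨hv.1.2, hv.1.1, hv.2⟩)
    intro v hv
    have N_smul_mem : (N : K) • v ∈ W := by
      rw [← mem_weightSpace.1 hv.1, ← sum_weightOp_single, LinearMap.sum_apply]
      exact sum_mem fun y _ => weightOp_mem y hv
    exact (Submodule.smul_mem_iff _ (Int.cast_ne_zero.2 hN)).1 N_smul_mem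

theorem cycles_le (vac_mem : F.vac ∈ W) (d_mem : ∀ u, F.d u ∈ W)
    (E_mem : ∀ a b, ∀ v ∈ W, F.E a b v ∈ W) (hW : F.LiftsWedgeProds W) : F.cycles ≤ W :=
  le_of_inf_weightSpace_le (cycles_le_comap_weightOp 1) fun m v hv =>
    weightSpace_inf_cycles_le vac_mem d_mem E_mem hW m ⟨by simpa using hv.2, hv.1⟩

end Cycles

end FockSpace

/-! ### Polynomials and exterior algebras -/

section Polynomial

variable {σ R : Type*} [CommRing R]

theorem pderiv_X_eq_C_kron [DecidableEq σ] (i j : σ) :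
    pderiv i (X j : MvPolynomial σ R) = C (kron R i j) := by
  rw [pderiv_X, kron_comm, kron, Pi.single_apply, apply_ite C, C_1, C_0]

theorem pderiv_comm (i j : σ) (f : MvPolynomial σ R) :
    pderiv i (pderiv j f) = pderiv j (pderiv i f) := by
  classical
  have h : ⁅pderiv (R := R) i, pderiv (R := R) j⁆ = 0 := by
    refine MvPolynomial.derivation_ext fun l => ?_
    rw [Derivation.commutator_apply, pderiv_X_eq_C_kron, pderiv_X_eq_C_kron, pderiv_C, pderiv_C,
      sub_zero, Derivation.zero_apply]
  rw [← sub_eq_zero, ← Derivation.commutator_apply, h, Derivation.zero_apply]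

theorem isHomogeneous_zero_eq_C {f : MvPolynomial σ R} (hf : f.IsHomogeneous 0) :
    f = C (constantCoeff f) :=
  totalDegree_eq_zero_iff_eq_C.1 (Nat.le_zero.1 hf.totalDegree_le)

variable [Fintype σ]

/-- The Fischer (apolar) bilinear form `⟨f, g⟩ = (f(∂) g)(0)` on polynomials, for which monomials
are orthogonal and multiplication by a variable is adjoint to differentiation. -/
def fischerForm : LinearMap.BilinForm R (MvPolynomial σ R) :=
  (basisMonomials σ R).constr R fun α => ((∏ j, (α j).factorial : ℕ) : R) • lcoeff R α

theorem fischerForm_monomial (α : σ →₀ ℕ) (g : MvPolynomial σ R) :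
    fischerForm (monomial α 1) g = ((∏ j, (α j).factorial : ℕ) : R) * coeff α g := by
  have h := (basisMonomials σ R).constr_basis R
    (fun α => ((∏ j, (α j).factorial : ℕ) : R) • lcoeff R α) α
  rw [coe_basisMonomials] at h
  exact LinearMap.congr_fun h g

theorem fischerForm_one (g : MvPolynomial σ R) : fischerForm 1 g = constantCoeff g := by
  simpa [constantCoeff_eq] using fischerForm_monomial (0 : σ →₀ ℕ) g

theorem prod_factorial_add_single (α : σ →₀ ℕ) (i : σ) :
    ∏ j, ((α + Finsupp.single i 1 : σ →₀ ℕ) j).factorial = (α i + 1) * ∏ j, (α j).factorial := by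
  classical
  rw [← Finset.mul_prod_erase _ _ (Finset.mem_univ i),
    ← Finset.mul_prod_erase Finset.univ (fun j => (α j).factorial) (Finset.mem_univ i), ← mul_assoc]
  congr 1
  · simp [Nat.factorial_succ]
  · refine Finset.prod_congr rfl fun j hj => ?_
    simp [(Finset.ne_of_mem_erase hj).symm]

theorem fischerForm_X_mul (i : σ) (f g : MvPolynomial σ R) :
    fischerForm (X i * f) g = fischerForm f (pderiv i g) := by
  suffices h : fischerForm ∘ₗ LinearMap.mulLeft R (X i) =
      LinearMap.lcomp R R (pderiv i).toLinearMap ∘ₗ fischerForm from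
    LinearMap.congr_fun (LinearMap.congr_fun h f) g
  refine (basisMonomials σ R).ext fun α => LinearMap.ext fun g => ?_
  have h : X i * monomial α (1 : R) = monomial (α + Finsupp.single i 1) 1 := by
    rw [monomial_add_single, pow_one, mul_comm]
  simp only [coe_basisMonomials, LinearMap.comp_apply, LinearMap.mulLeft_apply,
    LinearMap.lcomp_apply, h, fischerForm_monomial, Derivation.coeFn_coe, coeff_pderiv,
    prod_factorial_add_single]
  push_cast
  ring

end Polynomial

section Exterior

variable {R M : Type*} [CommRing R] [AddCommGroup M] [Module R M]

/-- Contraction of the exterior algebra with a linear functional. -/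
def exteriorContraction : Module.Dual R M →ₗ[R] Module.End R (ExteriorAlgebra R M) :=
  CliffordAlgebra.contractLeft (Q := (0 : QuadraticForm R M))

theorem exteriorContraction_one (f : Module.Dual R M) :
    exteriorContraction f (1 : ExteriorAlgebra R M) = 0 :=
  CliffordAlgebra.contractLeft_one _ _

theorem exteriorContraction_ι_mul (f : Module.Dual R M) (m : M) (ω : ExteriorAlgebra R M) :
    exteriorContraction f (ExteriorAlgebra.ι R m * ω) =
      f m • ω - ExteriorAlgebra.ι R m * exteriorContraction f ω :=
  CliffordAlgebra.contractLeft_ι_mul _ _ _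

theorem exteriorContraction_ι (f : Module.Dual R M) (m : M) :
    exteriorContraction f (ExteriorAlgebra.ι R m) = f m • 1 := by
  simpa [exteriorContraction_one] using exteriorContraction_ι_mul f m 1

theorem exteriorContraction_anticomm (f g : Module.Dual R M) (ω : ExteriorAlgebra R M) :
    exteriorContraction f (exteriorContraction g ω) =
      -exteriorContraction g (exteriorContraction f ω) :=
  CliffordAlgebra.contractLeft_comm _ _ _

theorem ι_mul_ι_mul_anticomm (m m' : M) (ω : ExteriorAlgebra R M) :
    ExteriorAlgebra.ι R m * (ExteriorAlgebra.ι R m' * ω) =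
      -(ExteriorAlgebra.ι R m' * (ExteriorAlgebra.ι R m * ω)) := by
  rw [← mul_assoc, ← mul_assoc, eq_neg_of_add_eq_zero_left (ExteriorAlgebra.ι_add_mul_swap m m'),
    neg_mul]

theorem exteriorAlgebra_left_induction {p : ExteriorAlgebra R M → Prop} (one : p 1)
    (add : ∀ ω η, p ω → p η → p (ω + η)) (smul : ∀ (r : R) ω, p ω → p (r • ω))
    (ι_mul : ∀ m ω, p ω → p (ExteriorAlgebra.ι R m * ω)) (ω : ExteriorAlgebra R M) : p ω := by
  refine CliffordAlgebra.left_induction (Q := (0 : QuadraticForm R M)) (P := p)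
    (fun r => ?_) add (fun ω m h => ι_mul m ω h) ω
  rw [Algebra.algebraMap_eq_smul_one]
  exact smul r 1 one

/-- The action of `⋀ M` on itself by iterated contractions along `b : M → M*`; the order of
factors is reversed, hence the opposite algebra. -/
def iteratedContraction (b : M →ₗ[R] Module.Dual R M) :
    ExteriorAlgebra R M →ₐ[R] (Module.End R (ExteriorAlgebra R M))ᵐᵒᵖ :=
  ExteriorAlgebra.lift R
    ⟨(MulOpposite.opLinearEquiv R).toLinearMap ∘ₗ exteriorContraction ∘ₗ b, fun _ =>
      MulOpposite.unop_injective <| LinearMap.ext fun _ =>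
        CliffordAlgebra.contractLeft_contractLeft _ _⟩

/-- The extension of the bilinear form `b` on `M` to `⋀ M` for which wedging with `m` is adjoint
to contraction with `b m`. -/
def exteriorForm (b : M →ₗ[R] Module.Dual R M) : LinearMap.BilinForm R (ExteriorAlgebra R M) :=
  LinearMap.compr₂
    ((MulOpposite.opLinearEquiv R).symm.toLinearMap ∘ₗ (iteratedContraction b).toLinearMap)
    ExteriorAlgebra.algebraMapInv.toLinearMap

theorem exteriorForm_one (b : M →ₗ[R] Module.Dual R M) (v : ExteriorAlgebra R M) :
    exteriorForm b 1 v = ExteriorAlgebra.algebraMapInv v := by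
  simp [exteriorForm]

theorem exteriorForm_ι_mul (b : M →ₗ[R] Module.Dual R M) (m : M) (u v : ExteriorAlgebra R M) :
    exteriorForm b (ExteriorAlgebra.ι R m * u) v =
      exteriorForm b u (exteriorContraction (b m) v) := by
  simp [exteriorForm, iteratedContraction]

end Exterior

theorem lTensor_rTensor_comm {R M M' N N' : Type*} [CommSemiring R] [AddCommMonoid M]
    [AddCommMonoid M'] [AddCommMonoid N] [AddCommMonoid N'] [Module R M] [Module R M'] [Module R N]
    [Module R N'] (f : M →ₗ[R] M') (g : N →ₗ[R] N') (v : M ⊗[R] N) :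
    LinearMap.lTensor M' g (LinearMap.rTensor N f v) =
      LinearMap.rTensor N' f (LinearMap.lTensor M g v) := by
  rw [← LinearMap.comp_apply, ← LinearMap.comp_apply, LinearMap.lTensor_comp_rTensor,
    LinearMap.rTensor_comp_lTensor]

/-! ### The Koszul complex as a Fock space -/

namespace QuadraticKoszul

section Quadrics

/-- The second partial derivative `∂_i ∂_j`, as a linear functional on quadratic forms. -/
def hessian (i j : Fin n) : Module.Dual k (S2 k n) :=
  (lcoeff k 0) ∘ₗ (pderiv i).toLinearMap ∘ₗ (pderiv j).toLinearMap ∘ₗ (S2 k n).subtype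

theorem hessian_apply (i j : Fin n) (m : S2 k n) :
    hessian i j m = constantCoeff (pderiv i (pderiv j (m : S k n))) := rfl

theorem coe_q (i j : Fin n) : ((q i j : S2 k n) : S k n) = X i * X j := rfl

theorem q_comm (i j : Fin n) : (q i j : S2 k n) = q j i := Subtype.ext (mul_comm _ _)

theorem hessian_comm (i j : Fin n) : (hessian i j : Module.Dual k (S2 k n)) = hessian j i :=
  LinearMap.ext fun m => by rw [hessian_apply, hessian_apply, pderiv_comm]

theorem hessian_q (i j a b : Fin n) :
    hessian i j (q a b : S2 k n) = kron k i a * kron k j b + kron k i b * kron k j a := by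
  simp only [hessian_apply, coe_q, Derivation.leibniz, pderiv_X_eq_C_kron, smul_eq_mul, map_add,
    map_mul, pderiv_C, mul_zero, zero_add, constantCoeff_C]
  ring

theorem pderiv_pderiv_eq_C_hessian (i j : Fin n) (m : S2 k n) :
    pderiv i (pderiv j (m : S k n)) = C (hessian i j m) :=
  isHomogeneous_zero_eq_C (((mem_homogeneousSubmodule 2 _).1 m.2).pderiv.pderiv)

/-- Euler's identity, applied twice. -/
theorem two_smul_eq_sum_hessian_smul (m : S2 k n) :
    (2 : k) • m = ∑ i, ∑ j, hessian i j m • q i j := by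
  have hm := (mem_homogeneousSubmodule 2 (m : S k n)).1 m.2
  have euler (i : Fin n) : pderiv i (m : S k n) = ∑ j, X j * pderiv j (pderiv i (m : S k n)) := by
    simpa using (hm.pderiv (i := i)).sum_X_mul_pderiv.symm
  refine Subtype.ext ?_
  calc (2 : k) • (m : S k n) = 2 • (m : S k n) := by rw [two_smul, two_nsmul]
    _ = ∑ i, X i * pderiv i (m : S k n) := hm.sum_X_mul_pderiv.symm
    _ = ∑ i, ∑ j, hessian i j m • (X i * X j) :=
      Finset.sum_congr rfl fun i _ => by
        rw [euler, Finset.mul_sum]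
        refine Finset.sum_congr rfl fun j _ => ?_
        rw [pderiv_pderiv_eq_C_hessian, hessian_comm, smul_eq_C_mul]
        ring
    _ = ((∑ i, ∑ j, hessian i j m • q i j : S2 k n) : S k n) := by simp [coe_q]

theorem span_q_eq_top [CharZero k] :
    Submodule.span k (Set.range fun ij : Fin n × Fin n => (q ij.1 ij.2 : S2 k n)) = ⊤ := by
  refine eq_top_iff.2 fun m _ => ?_
  have h := two_smul_eq_sum_hessian_smul m
  rw [← eq_inv_smul_iff₀ two_ne_zero] at h
  rw [h]
  exact Submodule.smul_mem _ _ <| sum_mem fun i _ => sum_mem fun j _ =>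
    Submodule.smul_mem _ _ (Submodule.subset_span ⟨(i, j), rfl⟩)

theorem quadric_hom_ext [CharZero k] {U : Type*} [AddCommGroup U] [Module k U]
    {f g : S2 k n →ₗ[k] U} (h : ∀ i j, f (q i j) = g (q i j)) : f = g :=
  LinearMap.ext_on span_q_eq_top (by rintro _ ⟨ij, rfl⟩; exact h ij.1 ij.2)

/-- The Fischer form on quadratic forms, normalized by `quadricForm (q a b) = hessian a b`. -/
def quadricForm : S2 k n →ₗ[k] Module.Dual k (S2 k n) :=
  (1 / 2 : k) • ∑ i, ∑ j, (hessian i j).smulRight (hessian i j)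

theorem quadricForm_q [CharZero k] (a b : Fin n) :
    quadricForm (q a b : S2 k n) = hessian a b := by
  simp only [quadricForm, LinearMap.smul_apply, LinearMap.sum_apply, LinearMap.smulRight_apply,
    hessian_q, add_smul, mul_smul, Finset.sum_add_distrib, ← Finset.smul_sum, sum_kron_smul']
  rw [hessian_comm b a, ← two_smul k (hessian a b), smul_smul]
  norm_num

/-- The projection of quadratic forms that removes the coefficient of `x_y²`. -/
def eraseSquare (y : Fin n) : S2 k n →ₗ[k] S2 k n :=
  LinearMap.id - (1 / 2 : k) • (hessian y y).smulRight (q y y)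

theorem eraseSquare_q_self [CharZero k] (y : Fin n) : eraseSquare y (q y y : S2 k n) = 0 := by
  simp only [eraseSquare, LinearMap.sub_apply, LinearMap.id_apply, LinearMap.smul_apply,
    LinearMap.smulRight_apply, hessian_q, kron_self, smul_smul]
  norm_num

theorem eraseSquare_q_of_ne {y a b : Fin n} (h : ¬(a = y ∧ b = y)) :
    eraseSquare y (q a b : S2 k n) = q a b := by
  have : hessian y y (q a b : S2 k n) = 0 := by
    rw [hessian_q]
    rcases not_and_or.1 h with ha | hb
    · simp [kron_of_ne (Ne.symm ha)]
    · simp [kron_of_ne (Ne.symm hb)]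
  simp [eraseSquare, this]

end Quadrics

section Operators

/-- Multiplication by the variable `x_i`. -/
def mulX (i : Fin n) : Module.End k (KK k n) :=
  LinearMap.rTensor _ (LinearMap.mulLeft k (X i : S k n))

/-- The partial derivative `∂_i` on the coefficients. -/
def partialX (i : Fin n) : Module.End k (KK k n) :=
  LinearMap.rTensor _ (pderiv i : Derivation k (S k n) (S k n)).toLinearMap

/-- The wedge product with `x_a x_b`. -/
def wedge (a b : Fin n) : Module.End k (KK k n) :=
  LinearMap.lTensor (S k n) (LinearMap.mulLeft k (ExteriorAlgebra.ι k (q a b : S2 k n)))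

/-- The contraction with `∂_a ∂_b`. -/
def contract (a b : Fin n) : Module.End k (KK k n) :=
  LinearMap.lTensor (S k n) (exteriorContraction (hessian a b : Module.Dual k (S2 k n)))

/-- The bilinear form on the Koszul complex induced by the Fischer form on polynomials. -/
def koszulForm : LinearMap.BilinForm k (KK k n) :=
  LinearMap.BilinForm.tmul fischerForm (exteriorForm quadricForm)

/-- The algebra endomorphism of the Koszul complex setting `x_y` and the exterior generator
`x_y²` to zero. -/
def eraseVariable (y : Fin n) : Module.End k (KK k n) :=
  TensorProduct.map (aeval fun i => if i = y then 0 else X i : S k n →ₐ[k] S k n).toLinearMap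
    (ExteriorAlgebra.map (eraseSquare y)).toLinearMap

theorem mulX_tmul (i : Fin n) (s : S k n) (ω : ExteriorAlgebra k (S2 k n)) :
    mulX i (s ⊗ₜ[k] ω) = (X i * s) ⊗ₜ[k] ω := rfl

theorem partialX_tmul (i : Fin n) (s : S k n) (ω : ExteriorAlgebra k (S2 k n)) :
    partialX i (s ⊗ₜ[k] ω) = pderiv i s ⊗ₜ[k] ω := rfl

theorem wedge_tmul (a b : Fin n) (s : S k n) (ω : ExteriorAlgebra k (S2 k n)) :
    wedge a b (s ⊗ₜ[k] ω) = s ⊗ₜ[k] (ExteriorAlgebra.ι k (q a b) * ω) := rfl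

theorem contract_tmul (a b : Fin n) (s : S k n) (ω : ExteriorAlgebra k (S2 k n)) :
    contract a b (s ⊗ₜ[k] ω) = s ⊗ₜ[k] exteriorContraction (hessian a b) ω := rfl

theorem koszulForm_tmul (s s' : S k n) (ω ω' : ExteriorAlgebra k (S2 k n)) :
    koszulForm (s ⊗ₜ[k] ω) (s' ⊗ₜ[k] ω') =
      exteriorForm quadricForm ω ω' * fischerForm s s' := rfl

theorem eraseVariable_tmul (y : Fin n) (s : S k n) (ω : ExteriorAlgebra k (S2 k n)) :
    eraseVariable y (s ⊗ₜ[k] ω) =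
      aeval (fun i => if i = y then 0 else X i : Fin n → S k n) s ⊗ₜ[k]
        ExteriorAlgebra.map (eraseSquare y) ω := rfl

theorem mulX_comm (i j : Fin n) : (mulX i ∘ₗ mulX j : Module.End k (KK k n)) = mulX j ∘ₗ mulX i :=
  TensorProduct.ext' fun s ω => by
    simp only [LinearMap.comp_apply, mulX_tmul, mul_left_comm]

theorem partialX_comm (i j : Fin n) :
    (partialX i ∘ₗ partialX j : Module.End k (KK k n)) = partialX j ∘ₗ partialX i :=
  TensorProduct.ext' fun s ω => by
    simp only [LinearMap.comp_apply, partialX_tmul, pderiv_comm i j]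

theorem partialX_mulX (i j : Fin n) :
    (partialX i ∘ₗ mulX j : Module.End k (KK k n)) =
      mulX j ∘ₗ partialX i + kron k i j • LinearMap.id :=
  TensorProduct.ext' fun s ω => by
    simp only [LinearMap.comp_apply, LinearMap.add_apply, LinearMap.smul_apply, LinearMap.id_apply,
      partialX_tmul, mulX_tmul, Derivation.leibniz, pderiv_X_eq_C_kron, smul_eq_mul,
      TensorProduct.add_tmul, mul_comm s, C_mul', TensorProduct.smul_tmul']

theorem wedge_anticomm (a b a' b' : Fin n) :
    (wedge a b ∘ₗ wedge a' b' : Module.End k (KK k n)) = -(wedge a' b' ∘ₗ wedge a b) :=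
  TensorProduct.ext' fun s ω => by
    simp only [LinearMap.comp_apply, LinearMap.neg_apply, wedge_tmul, ← TensorProduct.tmul_neg,
      ι_mul_ι_mul_anticomm (q a b)]

theorem contract_anticomm (a b a' b' : Fin n) :
    (contract a b ∘ₗ contract a' b' : Module.End k (KK k n)) = -(contract a' b' ∘ₗ contract a b) :=
  TensorProduct.ext' fun s ω => by
    simp only [LinearMap.comp_apply, LinearMap.neg_apply, contract_tmul, ← TensorProduct.tmul_neg,
      exteriorContraction_anticomm (hessian a b)]

theorem contract_wedge (a b a' b' : Fin n) :
    (contract a b ∘ₗ wedge a' b' : Module.End k (KK k n)) =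
      (kron k a a' * kron k b b' + kron k a b' * kron k b a') • LinearMap.id -
        wedge a' b' ∘ₗ contract a b :=
  TensorProduct.ext' fun s ω => by
    simp only [LinearMap.comp_apply, LinearMap.sub_apply, LinearMap.smul_apply, LinearMap.id_apply,
      contract_tmul, wedge_tmul, exteriorContraction_ι_mul, hessian_q, TensorProduct.tmul_sub,
      TensorProduct.tmul_smul]

theorem koszulForm_one_mulX (i : Fin n) : koszulForm (1 : KK k n) ∘ₗ mulX i = 0 :=
  TensorProduct.ext' fun s ω => by
    simp [mulX_tmul, Algebra.TensorProduct.one_def, koszulForm_tmul, fischerForm_one]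

theorem koszulForm_one_wedge (a b : Fin n) : koszulForm (1 : KK k n) ∘ₗ wedge a b = 0 :=
  TensorProduct.ext' fun s ω => by
    simp [wedge_tmul, Algebra.TensorProduct.one_def, koszulForm_tmul, exteriorForm_one,
      ExteriorAlgebra.algebraMapInv]

theorem koszulForm_mulX_left (i : Fin n) :
    koszulForm ∘ₗ (mulX i : Module.End k (KK k n)) =
      LinearMap.lcomp k k (partialX i) ∘ₗ koszulForm :=
  TensorProduct.ext' fun s ω => TensorProduct.ext' fun s' ω' => by
    simp only [LinearMap.comp_apply, LinearMap.lcomp_apply, mulX_tmul, partialX_tmul,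
      koszulForm_tmul, fischerForm_X_mul]

theorem koszulForm_wedge_left [CharZero k] (a b : Fin n) :
    koszulForm ∘ₗ (wedge a b : Module.End k (KK k n)) =
      LinearMap.lcomp k k (contract a b) ∘ₗ koszulForm :=
  TensorProduct.ext' fun s ω => TensorProduct.ext' fun s' ω' => by
    simp only [LinearMap.comp_apply, LinearMap.lcomp_apply, wedge_tmul, contract_tmul,
      koszulForm_tmul, exteriorForm_ι_mul, quadricForm_q]

theorem mulX_injective (i : Fin n) : Function.Injective (mulX i : Module.End k (KK k n)) :=
  Module.Flat.rTensor_preserves_injective_linearMap _ (mul_right_injective₀ (X_ne_zero i))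

theorem eraseVariable_mulX_self (y : Fin n) :
    (eraseVariable y ∘ₗ mulX y : Module.End k (KK k n)) = 0 :=
  TensorProduct.ext' fun s ω => by simp [mulX_tmul, eraseVariable_tmul]

theorem eraseVariable_mulX_of_ne {y i : Fin n} (h : i ≠ y) :
    (eraseVariable y ∘ₗ mulX i : Module.End k (KK k n)) = mulX i ∘ₗ eraseVariable y :=
  TensorProduct.ext' fun s ω => by simp [mulX_tmul, eraseVariable_tmul, h]

theorem eraseVariable_wedge_self [CharZero k] (y : Fin n) :
    (eraseVariable y ∘ₗ wedge y y : Module.End k (KK k n)) = 0 :=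
  TensorProduct.ext' fun s ω => by simp [wedge_tmul, eraseVariable_tmul, eraseSquare_q_self]

theorem eraseVariable_wedge_of_ne {y a b : Fin n} (h : ¬(a = y ∧ b = y)) :
    (eraseVariable y ∘ₗ wedge a b : Module.End k (KK k n)) = wedge a b ∘ₗ eraseVariable y :=
  TensorProduct.ext' fun s ω => by simp [wedge_tmul, eraseVariable_tmul, eraseSquare_q_of_ne h]

theorem tmul_one_mem_of_closed {W : Submodule k (KK k n)} (one : 1 ∈ W)
    (mulX_mem : ∀ i, ∀ v ∈ W, mulX i v ∈ W) (s : S k n) : s ⊗ₜ[k] 1 ∈ W := by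
  induction s using MvPolynomial.induction_on with
  | C a => rw [C_eq_smul_one, ← TensorProduct.smul_tmul']; exact W.smul_mem _ one
  | add p q hp hq => rw [TensorProduct.add_tmul]; exact add_mem hp hq
  | mul_X p i hp => rw [mul_comm]; exact mulX_mem i _ hp

theorem tmul_ι_mul_mem_of_closed [CharZero k] {W : Submodule k (KK k n)}
    (wedge_mem : ∀ a b, ∀ v ∈ W, wedge a b v ∈ W) {s : S k n} {ω : ExteriorAlgebra k (S2 k n)}
    (h : s ⊗ₜ[k] ω ∈ W) (m : S2 k n) : s ⊗ₜ[k] (ExteriorAlgebra.ι k m * ω) ∈ W := by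
  have hm : m ∈ Submodule.span k (Set.range fun ij : Fin n × Fin n => (q ij.1 ij.2 : S2 k n)) := by
    rw [span_q_eq_top]
    exact Submodule.mem_top
  induction hm using Submodule.span_induction with
  | mem m hm => obtain ⟨ij, rfl⟩ := hm; exact wedge_mem ij.1 ij.2 _ h
  | zero => simp
  | add m m' _ _ hm hm' => simpa [add_mul, TensorProduct.tmul_add] using add_mem hm hm'
  | smul r m _ hm => simpa using W.smul_mem r hm

theorem eq_top_of_closed [CharZero k] (W : Submodule k (KK k n)) (one : 1 ∈ W)
    (mulX_mem : ∀ i, ∀ v ∈ W, mulX i v ∈ W)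
    (wedge_mem : ∀ a b, ∀ v ∈ W, wedge a b v ∈ W) : W = ⊤ := by
  have tmul_mem (ω : ExteriorAlgebra k (S2 k n)) : ∀ s : S k n, s ⊗ₜ[k] ω ∈ W := by
    induction ω using exteriorAlgebra_left_induction with
    | one => exact tmul_one_mem_of_closed one mulX_mem
    | add ω η hω hη => exact fun s => by rw [TensorProduct.tmul_add]; exact add_mem (hω s) (hη s)
    | smul r ω hω => exact fun s => by rw [TensorProduct.tmul_smul]; exact W.smul_mem r (hω s)
    | ι_mul m ω hω => exact fun s => tmul_ι_mul_mem_of_closed wedge_mem (hω s) m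
  rw [eq_top_iff, ← TensorProduct.span_tmul_eq_top, Submodule.span_le]
  rintro _ ⟨s, ω, rfl⟩
  exact tmul_mem ω s

end Operators

variable (k n) in
/-- The Koszul complex on the quadratic monomials, as a Fock space with vacuum `1`. -/
def fock [CharZero k] : FockSpace (Fin n) k (KK k n) where
  X := mulX
  P := partialX
  e := wedge
  c := contract
  vac := 1
  form := koszulForm
  pr := eraseVariable
  X_comm i j := LinearMap.congr_fun (mulX_comm i j)
  P_comm i j := LinearMap.congr_fun (partialX_comm i j)
  P_X i j := LinearMap.congr_fun (partialX_mulX i j)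
  e_X _ _ _ v := lTensor_rTensor_comm _ _ v
  c_X _ _ _ v := lTensor_rTensor_comm _ _ v
  P_e _ _ _ v := (lTensor_rTensor_comm _ _ v).symm
  P_c _ _ _ v := (lTensor_rTensor_comm _ _ v).symm
  e_anticomm a b a' b' := LinearMap.congr_fun (wedge_anticomm a b a' b')
  c_anticomm a b a' b' := LinearMap.congr_fun (contract_anticomm a b a' b')
  c_e a b a' b' := LinearMap.congr_fun (contract_wedge a b a' b')
  e_symm a b v := by rw [wedge, wedge, q_comm]
  c_symm a b v := by rw [contract, contract, hessian_comm]
  P_vac i := by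
    rw [Algebra.TensorProduct.one_def, partialX_tmul, Derivation.map_one_eq_zero,
      TensorProduct.zero_tmul]
  c_vac a b := by
    rw [Algebra.TensorProduct.one_def, contract_tmul, exteriorContraction_one,
      TensorProduct.tmul_zero]
  form_vac_vac := by
    simp [Algebra.TensorProduct.one_def, koszulForm_tmul, exteriorForm_one, fischerForm_one]
  form_vac_X i := LinearMap.congr_fun (koszulForm_one_mulX i)
  form_vac_e a b := LinearMap.congr_fun (koszulForm_one_wedge a b)
  form_X_left i u := LinearMap.congr_fun (LinearMap.congr_fun (koszulForm_mulX_left i) u)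
  form_e_left a b u := LinearMap.congr_fun (LinearMap.congr_fun (koszulForm_wedge_left a b) u)
  X_injective := mulX_injective
  pr_vac y := by rw [Algebra.TensorProduct.one_def, eraseVariable_tmul, map_one, map_one]
  pr_X_self y := LinearMap.congr_fun (eraseVariable_mulX_self y)
  pr_X_of_ne y i v h := LinearMap.congr_fun (eraseVariable_mulX_of_ne h) v
  pr_e_self y := LinearMap.congr_fun (eraseVariable_wedge_self y)
  pr_e_of_ne y a b v h := LinearMap.congr_fun (eraseVariable_wedge_of_ne h) v
  eq_top_of_closed := eq_top_of_closed

/-! ### The differential and the polarizations as derivations -/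

section Multiplication

theorem mulX_eq_mul (i : Fin n) (v : KK k n) : mulX i v = (X i ⊗ₜ[k] 1 : KK k n) * v := by
  suffices mulX i = LinearMap.mulLeft k (X i ⊗ₜ[k] 1 : KK k n) from LinearMap.congr_fun this v
  exact TensorProduct.ext' fun s ω => by simp [mulX_tmul]

theorem wedge_eq_mul (a b : Fin n) (v : KK k n) :
    wedge a b v = (1 ⊗ₜ[k] ExteriorAlgebra.ι k (q a b) : KK k n) * v := by
  suffices wedge a b = LinearMap.mulLeft k (1 ⊗ₜ[k] ExteriorAlgebra.ι k (q a b) : KK k n) from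
    LinearMap.congr_fun this v
  exact TensorProduct.ext' fun s ω => by simp [wedge_tmul]

theorem mulX_mul (i : Fin n) (u v : KK k n) : mulX i u * v = mulX i (u * v) := by
  rw [mulX_eq_mul, mulX_eq_mul, mul_assoc]

theorem wedge_mul (a b : Fin n) (u v : KK k n) : wedge a b u * v = wedge a b (u * v) := by
  rw [wedge_eq_mul, wedge_eq_mul, mul_assoc]

theorem tmul_ι_mul (s : S k n) (m : S2 k n) (ω : ExteriorAlgebra k (S2 k n)) :
    (s ⊗ₜ[k] (ExteriorAlgebra.ι k m * ω) : KK k n) =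
      (1 ⊗ₜ[k] ExteriorAlgebra.ι k m) * (s ⊗ₜ[k] ω) := by
  rw [Algebra.TensorProduct.tmul_mul_tmul, one_mul]

theorem tmul_ιMulti_succ (s : S k n) {t : ℕ} (m : Fin (t + 1) → S2 k n) :
    (s ⊗ₜ[k] ExteriorAlgebra.ιMulti k (t + 1) m : KK k n) =
      (1 ⊗ₜ[k] ExteriorAlgebra.ι k (m 0)) *
        (s ⊗ₜ[k] ExteriorAlgebra.ιMulti k t fun l => m l.succ) := by
  rw [ExteriorAlgebra.ιMulti_succ_apply, tmul_ι_mul]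
  rfl

theorem tmul_ιMulti_update_zero (s : S k n) {t : ℕ} (m : Fin (t + 1) → S2 k n) (x : S2 k n) :
    (s ⊗ₜ[k] ExteriorAlgebra.ιMulti k (t + 1) (Function.update m 0 x) : KK k n) =
      (1 ⊗ₜ[k] ExteriorAlgebra.ι k x) * (s ⊗ₜ[k] ExteriorAlgebra.ιMulti k t fun l => m l.succ) := by
  simp only [tmul_ιMulti_succ, Function.update_self, Function.update_of_ne (Fin.succ_ne_zero _)]

theorem tmul_ιMulti_update_succ (s : S k n) {t : ℕ} (m : Fin (t + 1) → S2 k n) (j : Fin t)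
    (x : S2 k n) :
    (s ⊗ₜ[k] ExteriorAlgebra.ιMulti k (t + 1) (Function.update m j.succ x) : KK k n) =
      (1 ⊗ₜ[k] ExteriorAlgebra.ι k (m 0)) *
        (s ⊗ₜ[k] ExteriorAlgebra.ιMulti k t (Function.update (fun l => m l.succ) j x)) := by
  rw [tmul_ιMulti_succ, Function.update_of_ne (Fin.succ_ne_zero j).symm]
  congr 3
  exact Function.update_comp_eq_of_injective m (Fin.succ_injective t) j x

end Multiplication

section Polarize

/-- The polarization `x_a ∂/∂x_b` of quadratic forms. -/
def polarize (a b : Fin n) (m : S2 k n) : S2 k n := ∑ l, hessian b l m • q a l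

theorem polarize_q (a b i j : Fin n) :
    polarize a b (q i j : S2 k n) = kron k b i • q a j + kron k b j • q i a := by
  simp only [polarize, hessian_q, add_smul, mul_smul, Finset.sum_add_distrib, ← Finset.smul_sum,
    sum_kron_smul', q_comm a i]

end Polarize

section Differential

variable [CharZero k]

theorem d_mulX (i : Fin n) (v : KK k n) : (fock k n).d (mulX i v) = mulX i ((fock k n).d v) :=
  (fock k n).d_X i v

theorem d_wedge (a b : Fin n) (v : KK k n) :
    (fock k n).d (wedge a b v) = mulX a (mulX b v) - wedge a b ((fock k n).d v) :=
  (fock k n).d_e a b v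

theorem d_tmul_one_mul (s : S k n) (v : KK k n) :
    (fock k n).d ((s ⊗ₜ[k] 1) * v) = (s ⊗ₜ[k] 1) * (fock k n).d v := by
  refine tmul_one_mem_of_closed (W := LinearMap.eqLocus ((fock k n).d ∘ₗ LinearMap.mulRight k v)
    (LinearMap.mulRight k ((fock k n).d v))) ?_ (fun i u hu => ?_) s
  · simp
  · simp only [LinearMap.mem_eqLocus, LinearMap.comp_apply, LinearMap.mulRight_apply] at hu ⊢
    rw [mulX_mul, d_mulX, hu, mulX_mul]

theorem d_tmul_one (s : S k n) : (fock k n).d (s ⊗ₜ[k] 1) = 0 := by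
  have h : (fock k n).d 1 = 0 := (fock k n).d_vac
  simpa [h] using d_tmul_one_mul s (1 : KK k n)

theorem d_ι_mul (m : S2 k n) (v : KK k n) :
    (fock k n).d ((1 ⊗ₜ[k] ExteriorAlgebra.ι k m) * v) =
      ((m : S k n) ⊗ₜ[k] 1) * v - (1 ⊗ₜ[k] ExteriorAlgebra.ι k m) * (fock k n).d v := by
  let ι₁ : S2 k n →ₗ[k] KK k n := TensorProduct.mk k (S k n) _ 1 ∘ₗ ExteriorAlgebra.ι k
  let coeff₁ : S2 k n →ₗ[k] KK k n :=
    (TensorProduct.mk k _ (ExteriorAlgebra k (S2 k n))).flip 1 ∘ₗ (S2 k n).subtype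
  suffices (fock k n).d ∘ₗ LinearMap.mulRight k v ∘ₗ ι₁ =
      LinearMap.mulRight k v ∘ₗ coeff₁ - LinearMap.mulRight k ((fock k n).d v) ∘ₗ ι₁ from
    LinearMap.congr_fun this m
  refine quadric_hom_ext fun i j => ?_
  change (fock k n).d ((1 ⊗ₜ[k] ExteriorAlgebra.ι k (q i j)) * v) =
    ((X i * X j : S k n) ⊗ₜ[k] 1) * v - (1 ⊗ₜ[k] ExteriorAlgebra.ι k (q i j)) * (fock k n).d v
  rw [← wedge_eq_mul, ← wedge_eq_mul, d_wedge, mulX_eq_mul i, mulX_eq_mul j, ← mul_assoc,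
    Algebra.TensorProduct.tmul_mul_tmul, one_mul]

theorem d_tmul_ιMulti_zero (s : S k n) (m : Fin 0 → S2 k n) :
    (fock k n).d (s ⊗ₜ[k] ExteriorAlgebra.ιMulti k 0 m) = 0 := by
  rw [ExteriorAlgebra.ιMulti_zero_apply, d_tmul_one]

theorem d_tmul_ιMulti_succ (t : ℕ) (s : S k n) (m : Fin (t + 1) → S2 k n) :
    (fock k n).d (s ⊗ₜ[k] ExteriorAlgebra.ιMulti k (t + 1) m) =
      ∑ j : Fin (t + 1), (-1 : ℤ) ^ (j : ℕ) • ((s * (m j : S k n)) ⊗ₜ[k]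
        ExteriorAlgebra.ιMulti k t fun l => m (j.succAbove l)) := by
  induction t with
  | zero =>
    rw [tmul_ιMulti_succ, d_ι_mul, d_tmul_ιMulti_zero]
    simp [mul_comm s]
  | succ t ih =>
    rw [tmul_ιMulti_succ, d_ι_mul, ih, Finset.mul_sum, Fin.sum_univ_succ (n := t + 1),
      sub_eq_add_neg, ← Finset.sum_neg_distrib, Algebra.TensorProduct.tmul_mul_tmul, one_mul,
      mul_comm s]
    congr 1
    · simp
    · refine Finset.sum_congr rfl fun j _ => ?_
      rw [tmul_ιMulti_succ _ fun l => m (j.succ.succAbove l), mul_smul_comm, Fin.val_succ,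
        pow_succ', mul_smul, neg_one_smul]
      simp

theorem d_tmul_ιMulti_mul (t : ℕ) (s : S k n) (m : Fin t → S2 k n) (v : KK k n) :
    (fock k n).d ((s ⊗ₜ[k] ExteriorAlgebra.ιMulti k t m) * v) =
      (fock k n).d (s ⊗ₜ[k] ExteriorAlgebra.ιMulti k t m) * v +
        (-1 : k) ^ t • ((s ⊗ₜ[k] ExteriorAlgebra.ιMulti k t m) * (fock k n).d v) := by
  induction t with
  | zero => simp [d_tmul_one_mul, d_tmul_one]
  | succ t ih =>
    rw [tmul_ιMulti_succ, mul_assoc, d_ι_mul, ih, d_ι_mul, mul_add, sub_mul, mul_assoc, mul_assoc,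
      mul_assoc, mul_smul_comm, pow_succ', mul_smul, neg_one_smul]
    abel

end Differential

section Polarization

variable [CharZero k]

theorem E_one (a b : Fin n) : (fock k n).E a b 1 = 0 := (fock k n).E_vac a b

theorem E_mulX (a b i : Fin n) (v : KK k n) :
    (fock k n).E a b (mulX i v) = mulX i ((fock k n).E a b v) + kron k b i • mulX a v :=
  (fock k n).E_X a b i v

theorem E_wedge (a b i j : Fin n) (v : KK k n) :
    (fock k n).E a b (wedge i j v) =
      wedge i j ((fock k n).E a b v) + kron k b i • wedge a j v + kron k b j • wedge a i v :=
  (fock k n).E_e a b i j v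

theorem E_mul (a b : Fin n) (u v : KK k n) :
    (fock k n).E a b (u * v) = (fock k n).E a b u * v + u * (fock k n).E a b v := by
  suffices (fock k n).E a b ∘ₗ LinearMap.mulRight k v =
      LinearMap.mulRight k v ∘ₗ (fock k n).E a b + LinearMap.mulRight k ((fock k n).E a b v) from
    LinearMap.congr_fun this u
  refine (fock k n).hom_ext ?_ (fun i w hw => ?_) (fun i j w hw => ?_)
  · change (fock k n).E a b (1 * v) = (fock k n).E a b 1 * v + 1 * (fock k n).E a b v
    rw [E_one, one_mul, zero_mul, one_mul, zero_add]
  · change (fock k n).E a b (w * v) = (fock k n).E a b w * v + w * (fock k n).E a b v at hw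
    change (fock k n).E a b (mulX i w * v) =
      (fock k n).E a b (mulX i w) * v + mulX i w * (fock k n).E a b v
    simp only [mulX_mul, E_mulX, hw, add_mul, smul_mul_assoc, map_add]
    abel
  · change (fock k n).E a b (w * v) = (fock k n).E a b w * v + w * (fock k n).E a b v at hw
    change (fock k n).E a b (wedge i j w * v) =
      (fock k n).E a b (wedge i j w) * v + wedge i j w * (fock k n).E a b v
    simp only [wedge_mul, E_wedge, hw, add_mul, smul_mul_assoc, map_add]
    abel

theorem E_one_tmul_ι (a b : Fin n) (m : S2 k n) :
    (fock k n).E a b (1 ⊗ₜ[k] ExteriorAlgebra.ι k m) =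
      1 ⊗ₜ[k] ExteriorAlgebra.ι k (polarize a b m) := by
  rw [FockSpace.E_apply]
  change mulX a (partialX b _) + ∑ l, wedge a l (contract b l _) = _
  simp only [partialX_tmul, contract_tmul, exteriorContraction_ι, Derivation.map_one_eq_zero,
    TensorProduct.zero_tmul, map_zero, zero_add, TensorProduct.tmul_smul, map_smul, wedge_tmul,
    mul_one, polarize, map_sum, TensorProduct.tmul_sum]

theorem E_X_tmul_one (a b i : Fin n) :
    (fock k n).E a b (X i ⊗ₜ[k] 1) = kron k b i • (X a ⊗ₜ[k] 1) := by
  simpa [mulX_eq_mul, E_one] using E_mulX a b i (1 : KK k n)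

theorem E_X_tmul_ιMulti (a b i : Fin n) (t : ℕ) (m : Fin t → S2 k n) :
    (fock k n).E a b (X i ⊗ₜ[k] ExteriorAlgebra.ιMulti k t m) =
      kron k b i • (X a ⊗ₜ[k] ExteriorAlgebra.ιMulti k t m) +
        ∑ j, X i ⊗ₜ[k] ExteriorAlgebra.ιMulti k t
          (Function.update m j (polarize a b (m j))) := by
  induction t with
  | zero => simp [E_X_tmul_one]
  | succ t ih =>
    rw [tmul_ιMulti_succ, E_mul, E_one_tmul_ι, ih, Fin.sum_univ_succ, mul_add, Finset.mul_sum,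
      mul_smul_comm, tmul_ιMulti_update_zero, Finset.sum_congr rfl fun j _ =>
        tmul_ιMulti_update_succ (X i) m j (polarize a b (m j.succ)), tmul_ιMulti_succ (X a)]
    exact add_left_comm _ _ _

end Polarization

/-! ### The cycles `z_{a,b}` -/

theorem sum_sign_smul_eq_zero_of_swap {α M : Type*} [Fintype α] [DecidableEq α] [AddCommGroup M]
    {i j : α} (hij : i ≠ j) (f : Equiv.Perm α → M) (hf : ∀ σ, f (σ * Equiv.swap i j) = f σ) :
    ∑ σ, (Equiv.Perm.sign σ : ℤ) • f σ = 0 := by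
  refine Finset.sum_involution (fun σ _ => σ * Equiv.swap i j) (fun σ _ => ?_) (fun σ _ _ h => ?_)
    (fun _ _ => Finset.mem_univ _) fun σ _ => ?_
  · simp [hf, Equiv.Perm.sign_swap hij]
  · exact hij (Equiv.swap_eq_one_iff.1 (mul_eq_left.1 h))
  · simp [mul_assoc]

theorem exists_perm_castSucc_of_apply_last {r : ℕ} {σ : Equiv.Perm (Fin (r + 1))}
    (hσ : σ (Fin.last r) = Fin.last r) :
    ∃ τ : Equiv.Perm (Fin r), (∀ j, σ j.castSucc = (τ j).castSucc) ∧
      Equiv.Perm.sign τ = Equiv.Perm.sign σ := by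
  have preserves : ∀ x, σ x ≠ Fin.last r ↔ x ≠ Fin.last r := fun x => by
    rw [← σ.injective.ne_iff (x := x), hσ]
  have moved : ∀ x, σ x ≠ x → x ≠ Fin.last r := by
    rintro x hx rfl
    exact hx hσ
  refine ⟨(finSuccAboveEquiv (Fin.last r)).symm.permCongr (σ.subtypePerm preserves),
    fun j => ?_, ?_⟩
  · rw [Equiv.permCongr_apply, Equiv.symm_symm, finSuccAboveEquiv_symm_apply_last]
    simp [finSuccAboveEquiv_apply]
  · rw [Equiv.Perm.sign_permCongr, Equiv.Perm.sign_subtypePerm _ preserves moved]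

section ZVar

variable {r : ℕ}

/-- The element `z_{a,b}` for sequences of variables, which are given by their indices. -/
def zvar (a : Fin (r + 1) → Fin n) (b : Fin r → Fin n) : KK k n :=
  zel r (fun l => xv (a l)) fun l => xv (b l)

/-- The summand of `z_{a,b}` attached to a permutation, without its sign. -/
def zvarTerm (a : Fin (r + 1) → Fin n) (b : Fin r → Fin n) (σ : Equiv.Perm (Fin (r + 1))) :
    KK k n :=
  X (a (σ (Fin.last r))) ⊗ₜ[k] ExteriorAlgebra.ιMulti k r fun j => q (b j) (a (σ j.castSucc))

theorem zvar_eq_sum (a : Fin (r + 1) → Fin n) (b : Fin r → Fin n) :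
    (zvar a b : KK k n) = ∑ σ, (Equiv.Perm.sign σ : ℤ) • zvarTerm a b σ := rfl

theorem zvarTerm_update_right (a : Fin (r + 1) → Fin n) (b : Fin r → Fin n)
    (σ : Equiv.Perm (Fin (r + 1))) (j : Fin r) (c : Fin n) :
    (zvarTerm a (Function.update b j c) σ : KK k n) =
      X (a (σ (Fin.last r))) ⊗ₜ[k] ExteriorAlgebra.ιMulti k r
        (Function.update (fun l => q (b l) (a (σ l.castSucc))) j (q c (a (σ j.castSucc)))) := by
  rw [zvarTerm]
  congr 2
  funext l
  obtain rfl | hl := eq_or_ne l j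
  · simp
  · simp [hl]

theorem zvarTerm_update_left_castSucc (a : Fin (r + 1) → Fin n) (b : Fin r → Fin n)
    (σ : Equiv.Perm (Fin (r + 1))) (j : Fin r) (c : Fin n) :
    (zvarTerm (Function.update a (σ j.castSucc) c) b σ : KK k n) =
      X (a (σ (Fin.last r))) ⊗ₜ[k] ExteriorAlgebra.ιMulti k r
        (Function.update (fun l => q (b l) (a (σ l.castSucc))) j (q (b j) c)) := by
  rw [zvarTerm, Function.update_of_ne (σ.injective.ne (Fin.castSucc_lt_last j).ne')]
  congr 2
  funext l
  obtain rfl | hl := eq_or_ne l j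
  · simp
  · simp [hl]

theorem zvarTerm_update_left_last (a : Fin (r + 1) → Fin n) (b : Fin r → Fin n)
    (σ : Equiv.Perm (Fin (r + 1))) (c : Fin n) :
    (zvarTerm (Function.update a (σ (Fin.last r)) c) b σ : KK k n) =
      X c ⊗ₜ[k] ExteriorAlgebra.ιMulti k r fun j => q (b j) (a (σ j.castSucc)) := by
  have untouched (l : Fin r) :
      Function.update a (σ (Fin.last r)) c (σ l.castSucc) = a (σ l.castSucc) :=
    Function.update_of_ne (σ.injective.ne (Fin.castSucc_lt_last l).ne) _ _
  simp only [zvarTerm, Function.update_self, untouched]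

variable [CharZero k]

theorem E_zvarTerm (α β : Fin n) (a : Fin (r + 1) → Fin n) (b : Fin r → Fin n)
    (σ : Equiv.Perm (Fin (r + 1))) :
    (fock k n).E α β (zvarTerm a b σ) =
      ∑ j, kron k β (b j) • zvarTerm a (Function.update b j α) σ +
        ∑ i, kron k β (a i) • zvarTerm (Function.update a i α) b σ := by
  rw [← Equiv.sum_comp σ fun i => kron k β (a i) • zvarTerm (Function.update a i α) b σ,
    Fin.sum_univ_castSucc (n := r), ← add_assoc, ← Finset.sum_add_distrib, zvarTerm,
    E_X_tmul_ιMulti, add_comm, zvarTerm_update_left_last]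
  congr 1
  refine Finset.sum_congr rfl fun j _ => ?_
  rw [polarize_q, AlternatingMap.map_update_add, AlternatingMap.map_update_smul,
    AlternatingMap.map_update_smul, TensorProduct.tmul_add, TensorProduct.tmul_smul,
    TensorProduct.tmul_smul, zvarTerm_update_right, zvarTerm_update_left_castSucc]

theorem E_zvar (α β : Fin n) (a : Fin (r + 1) → Fin n) (b : Fin r → Fin n) :
    (fock k n).E α β (zvar a b) =
      ∑ j, kron k β (b j) • zvar a (Function.update b j α) +
        ∑ i, kron k β (a i) • zvar (Function.update a i α) b := by
  simp only [zvar_eq_sum, map_sum, map_zsmul, E_zvarTerm, smul_add, Finset.sum_add_distrib,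
    Finset.smul_sum, smul_comm (Equiv.Perm.sign _ : ℤ) (kron k _ _)]
  rw [Finset.sum_comm, Finset.sum_comm (γ := Fin (r + 1))]

theorem d_zvar (a : Fin (r + 1) → Fin n) (b : Fin r → Fin n) :
    (fock k n).d (zvar a b) = 0 := by
  simp only [zvar_eq_sum, map_sum, map_zsmul, zvarTerm]
  cases r with
  | zero => exact Finset.sum_eq_zero fun σ _ => by rw [d_tmul_ιMulti_zero, smul_zero]
  | succ r =>
    simp only [d_tmul_ιMulti_succ, Finset.smul_sum]
    rw [Finset.sum_comm]
    -- erasing the `j`-th wedge factor leaves a term symmetric in `σ j` and `σ (last _)`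
    refine Finset.sum_eq_zero fun j _ =>
      sum_sign_smul_eq_zero_of_swap (Fin.castSucc_lt_last j).ne _ fun σ => ?_
    have untouched (l : Fin r) :
        Equiv.swap j.castSucc (Fin.last (r + 1)) (j.succAbove l).castSucc =
          (j.succAbove l).castSucc :=
      Equiv.swap_apply_of_ne_of_ne (Fin.castSucc_injective _ |>.ne (Fin.succAbove_ne j l))
        (Fin.castSucc_lt_last _).ne
    simp only [Equiv.Perm.mul_apply, Equiv.swap_apply_left, Equiv.swap_apply_right, untouched,
      coe_q, mul_left_comm (X (a _)) (X (b j)) (X (a _)), mul_comm (X (a (σ j.castSucc)))]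

end ZVar

section LeadingTerm

variable [CharZero k]

theorem wedgeProd_eq_mul (y : Fin n) (l : List (Fin n)) (p : KK k n) :
    (fock k n).wedgeProd y l p =
      (1 ⊗ₜ[k] ExteriorAlgebra.ιMulti k l.length fun j => q y (l.get j)) * p := by
  induction l with
  | nil =>
    change p = (1 ⊗ₜ[k] ExteriorAlgebra.ιMulti k 0 _) * p
    rw [ExteriorAlgebra.ιMulti_zero_apply, ← Algebra.TensorProduct.one_def, one_mul]
  | cons j l ih =>
    change wedge y j ((fock k n).wedgeProd y l p) =
      (1 ⊗ₜ[k] ExteriorAlgebra.ιMulti k (l.length + 1) _) * p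
    rw [ih, wedge_eq_mul, ← mul_assoc, tmul_ιMulti_succ]
    rfl

theorem tmul_ιMulti_mul_mem_sqIdeal {r : ℕ} (y : Fin n) (s : S k n) (m : Fin r → S2 k n)
    {j : Fin r} (hj : m j = q y y) (p : KK k n) :
    (s ⊗ₜ[k] ExteriorAlgebra.ιMulti k r m) * p ∈ (fock k n).sqIdeal y := by
  obtain _ | r := r
  · exact j.elim0
  have of_head (m : Fin (r + 1) → S2 k n) (hm : m 0 = q y y) :
      (s ⊗ₜ[k] ExteriorAlgebra.ιMulti k (r + 1) m) * p ∈ (fock k n).sqIdeal y := by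
    rw [tmul_ιMulti_succ, hm, mul_assoc, ← wedge_eq_mul]
    exact (fock k n).e_self_mem_sqIdeal _
  obtain rfl | hj0 := eq_or_ne j 0
  · exact of_head m hj
  · have swapped := of_head (m ∘ Equiv.swap 0 j) (by simp [hj])
    rw [AlternatingMap.map_swap _ _ hj0.symm, ← neg_one_smul k, TensorProduct.tmul_smul,
      smul_mul_assoc] at swapped
    exact (Submodule.smul_mem_iff _ (neg_ne_zero.2 one_ne_zero)).1 swapped

theorem zvarTerm_snoc_mul_eq (y : Fin n) (l : List (Fin n))
    {σ : Equiv.Perm (Fin (l.length + 1))} (hσ : σ (Fin.last _) = Fin.last _) (p : KK k n) :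
    ((Equiv.Perm.sign σ : ℤ) •
        zvarTerm (Fin.snoc (α := fun _ => Fin n) l.get y) (fun _ => y) σ) * p =
      mulX y ((fock k n).wedgeProd y l p) := by
  obtain ⟨τ, hτ, sign_τ⟩ := exists_perm_castSucc_of_apply_last hσ
  have term_eq : (zvarTerm (Fin.snoc (α := fun _ => Fin n) l.get y) (fun _ => y) σ : KK k n) =
      (Equiv.Perm.sign σ : ℤ) • X y ⊗ₜ[k] ExteriorAlgebra.ιMulti k _ fun j => q y (l.get j) := by
    simp only [zvarTerm, hσ, hτ, Fin.snoc_last, Fin.snoc_castSucc]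
    rw [← sign_τ, ← TensorProduct.tmul_smul, ← Units.smul_def, ← AlternatingMap.map_perm]
    rfl
  rw [term_eq, smul_smul, ← Units.val_mul, Int.units_mul_self, Units.val_one, one_smul,
    wedgeProd_eq_mul, mulX_eq_mul, ← mul_assoc, Algebra.TensorProduct.tmul_mul_tmul,
    mul_one, one_mul]

theorem zvarTerm_snoc_mul_mem_sqIdeal (y : Fin n) (l : List (Fin n))
    {σ : Equiv.Perm (Fin (l.length + 1))} (hσ : σ (Fin.last _) ≠ Fin.last _) (p : KK k n) :
    zvarTerm (Fin.snoc (α := fun _ => Fin n) l.get y) (fun _ => y) σ * p ∈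
      (fock k n).sqIdeal y := by
  obtain ⟨i, hi⟩ := σ.surjective (Fin.last _)
  obtain ⟨j, rfl⟩ | rfl := Fin.eq_castSucc_or_eq_last i
  · exact tmul_ιMulti_mul_mem_sqIdeal y _ _ (j := j) (by rw [hi, Fin.snoc_last]) p
  · exact absurd hi hσ

theorem zvar_snoc_mul_sub_mem_sqIdeal (y : Fin n) (l : List (Fin n)) (p : KK k n) :
    zvar (Fin.snoc (α := fun _ => Fin n) l.get y) (fun _ => y) * p -
        ({σ : Equiv.Perm (Fin (l.length + 1)) | σ (Fin.last _) = Fin.last _} : Finset _).card •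
          mulX y ((fock k n).wedgeProd y l p) ∈ (fock k n).sqIdeal y := by
  rw [zvar_eq_sum, Finset.sum_mul, ← Finset.sum_filter_add_sum_filter_not _
    fun σ : Equiv.Perm (Fin (l.length + 1)) => σ (Fin.last _) = Fin.last _,
    Finset.sum_congr rfl fun σ hσ => zvarTerm_snoc_mul_eq y l (Finset.mem_filter.1 hσ).2 p,
    Finset.sum_const, add_sub_cancel_left]
  refine sum_mem fun σ hσ => ?_
  rw [smul_mul_assoc]
  exact zsmul_mem (zvarTerm_snoc_mul_mem_sqIdeal y l (Finset.mem_filter.1 hσ).2 p) _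

theorem card_perm_fixing_last_ne_zero (r : ℕ) :
    ({σ : Equiv.Perm (Fin (r + 1)) | σ (Fin.last _) = Fin.last _} : Finset _).card ≠ 0 :=
  Finset.card_ne_zero.2 ⟨1, by simp⟩

end LeadingTerm

/-! ### The homological grading -/

section Grading

variable {r t : ℕ}

theorem tmul_mem_Kt (s : S k n) {ω : ExteriorAlgebra k (S2 k n)} (hω : ω ∈ ⋀[k]^t (S2 k n)) :
    s ⊗ₜ[k] ω ∈ Kt k n t :=
  ⟨s ⊗ₜ[k] ⟨ω, hω⟩, rfl⟩

theorem tmul_ιMulti_mem_Kt (s : S k n) (m : Fin t → S2 k n) :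
    s ⊗ₜ[k] ExteriorAlgebra.ιMulti k t m ∈ Kt k n t :=
  tmul_mem_Kt s (ExteriorAlgebra.ιMulti_range k t ⟨m, rfl⟩)

theorem Kt_le_of_tmul_mem {W : Submodule k (KK k n)}
    (h : ∀ (s : S k n), ∀ ω ∈ ⋀[k]^t (S2 k n), s ⊗ₜ[k] ω ∈ W) : Kt k n t ≤ W := by
  rintro _ ⟨x, rfl⟩
  induction x using TensorProduct.induction_on with
  | zero =>
    rw [map_zero]
    exact zero_mem W
  | tmul s ω => exact h s ω ω.2
  | add x y hx hy =>
    rw [map_add]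
    exact add_mem hx hy

theorem Kt_le_of_tmul_ιMulti_mem {W : Submodule k (KK k n)}
    (h : ∀ (s : S k n) (m : Fin t → S2 k n), s ⊗ₜ[k] ExteriorAlgebra.ιMulti k t m ∈ W) :
    Kt k n t ≤ W := by
  refine Kt_le_of_tmul_mem fun s ω hω => ?_
  rw [← ExteriorAlgebra.ιMulti_span_fixedDegree] at hω
  suffices Submodule.span k (Set.range (ExteriorAlgebra.ιMulti k t)) ≤
      W.comap (TensorProduct.mk k _ _ s) from this hω
  exact Submodule.span_le.2 (Set.range_subset_iff.2 (h s))

theorem one_mem_Kt : (1 : KK k n) ∈ Kt k n 0 :=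
  tmul_mem_Kt 1 (SetLike.one_mem_graded fun i : ℕ => ⋀[k]^i (S2 k n))

theorem mul_mem_Kt {u v : KK k n} (hu : u ∈ Kt k n r) (hv : v ∈ Kt k n t) :
    u * v ∈ Kt k n (r + t) := by
  suffices Kt k n r ≤ (Kt k n (r + t)).comap (LinearMap.mulRight k v) from this hu
  refine Kt_le_of_tmul_mem fun s ω hω => ?_
  suffices Kt k n t ≤ (Kt k n (r + t)).comap (LinearMap.mulLeft k (s ⊗ₜ[k] ω)) from this hv
  refine Kt_le_of_tmul_mem fun s' ω' hω' => ?_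
  rw [Submodule.mem_comap, LinearMap.mulLeft_apply, Algebra.TensorProduct.tmul_mul_tmul]
  exact tmul_mem_Kt _ (SetLike.mul_mem_graded (A := fun i : ℕ => ⋀[k]^i (S2 k n)) hω hω')

theorem iSup_Kt_eq_top : ⨆ t, Kt k n t = ⊤ := by
  refine Submodule.eq_top_iff'.2 fun v => ?_
  induction v using TensorProduct.induction_on with
  | zero => exact zero_mem _
  | tmul s ω =>
    induction ω using DirectSum.Decomposition.inductionOn (fun i : ℕ => ⋀[k]^i (S2 k n)) with
    | zero =>
      rw [TensorProduct.tmul_zero]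
      exact zero_mem _
    | homogeneous ω => exact Submodule.mem_iSup_of_mem _ (tmul_mem_Kt s ω.2)
    | add ω ω' h h' =>
      rw [TensorProduct.tmul_add]
      exact add_mem h h'
  | add x y hx hy => exact add_mem hx hy

theorem zvar_mem_Kt (a : Fin (r + 1) → Fin n) (b : Fin r → Fin n) : zvar a b ∈ Kt k n r := by
  rw [zvar_eq_sum]
  exact sum_mem fun σ _ => zsmul_mem (tmul_ιMulti_mem_Kt _ _) _

/-- The projection of `S ⊗ Λ(S_2)` onto its summand `K_t`. -/
def degreeProj (t : ℕ) : KK k n →ₗ[k] KK k n :=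
  LinearMap.lTensor (S k n) (GradedAlgebra.proj (fun i : ℕ => ⋀[k]^i (S2 k n)) t)

theorem degreeProj_tmul (s : S k n) (ω : ExteriorAlgebra k (S2 k n)) :
    degreeProj t (s ⊗ₜ[k] ω) =
      s ⊗ₜ[k] (DirectSum.decompose (fun i : ℕ => ⋀[k]^i (S2 k n)) ω t :
        ExteriorAlgebra k (S2 k n)) :=
  rfl

theorem degreeProj_mem_Kt (v : KK k n) : degreeProj t v ∈ Kt k n t := by
  induction v using TensorProduct.induction_on with
  | zero =>
    rw [map_zero]
    exact zero_mem _
  | tmul s ω => exact tmul_mem_Kt s (Subtype.property _)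
  | add x y hx hy =>
    rw [map_add]
    exact add_mem hx hy

theorem degreeProj_of_mem_Kt {v : KK k n} (hv : v ∈ Kt k n t) : degreeProj t v = v := by
  suffices Kt k n t ≤ LinearMap.eqLocus (degreeProj t) LinearMap.id from this hv
  refine Kt_le_of_tmul_mem fun s ω hω => ?_
  rw [LinearMap.mem_eqLocus, degreeProj_tmul, DirectSum.decompose_of_mem_same
    (fun i : ℕ => ⋀[k]^i (S2 k n)) hω]
  rfl

theorem degreeProj_of_mem_Kt_of_ne (hrt : r ≠ t) {v : KK k n} (hv : v ∈ Kt k n r) :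
    degreeProj t v = 0 := by
  suffices Kt k n r ≤ LinearMap.ker (degreeProj t) from this hv
  refine Kt_le_of_tmul_mem fun s ω hω => ?_
  rw [LinearMap.mem_ker, degreeProj_tmul, DirectSum.decompose_of_mem_ne
    (fun i : ℕ => ⋀[k]^i (S2 k n)) hω hrt, TensorProduct.tmul_zero]

variable [CharZero k]

theorem d_of_mem_Kt_zero {v : KK k n} (hv : v ∈ Kt k n 0) : (fock k n).d v = 0 :=
  Kt_le_of_tmul_ιMulti_mem (W := LinearMap.ker (fock k n).d) d_tmul_ιMulti_zero hv

theorem d_mem_Kt {v : KK k n} (hv : v ∈ Kt k n (t + 1)) : (fock k n).d v ∈ Kt k n t := by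
  suffices Kt k n (t + 1) ≤ (Kt k n t).comap (fock k n).d from this hv
  refine Kt_le_of_tmul_ιMulti_mem fun s m => ?_
  rw [Submodule.mem_comap, d_tmul_ιMulti_succ]
  exact sum_mem fun j _ => zsmul_mem (tmul_ιMulti_mem_Kt _ _) _

theorem degreeProj_d (v : KK k n) :
    degreeProj t ((fock k n).d v) = (fock k n).d (degreeProj (t + 1) v) := by
  suffices ⨆ r, Kt k n r ≤ LinearMap.eqLocus (degreeProj t ∘ₗ (fock k n).d)
      ((fock k n).d ∘ₗ degreeProj (t + 1)) from this (iSup_Kt_eq_top.ge trivial)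
  refine iSup_le fun r u hu => ?_
  rw [LinearMap.mem_eqLocus, LinearMap.comp_apply, LinearMap.comp_apply]
  obtain _ | r := r
  · rw [d_of_mem_Kt_zero hu, degreeProj_of_mem_Kt_of_ne t.succ_ne_zero.symm hu, map_zero, map_zero]
  obtain rfl | hr := eq_or_ne r t
  · rw [degreeProj_of_mem_Kt hu, degreeProj_of_mem_Kt (d_mem_Kt hu)]
  · rw [degreeProj_of_mem_Kt_of_ne hr (d_mem_Kt hu),
      degreeProj_of_mem_Kt_of_ne (Nat.succ_ne_succ_iff.2 hr) hu, map_zero]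

theorem koszulDiff_eq_d {D : ℕ → KK k n →ₗ[k] KK k n} (hD : IsKoszulDiff D) {v : KK k n}
    (hv : v ∈ Kt k n t) : D t v = (fock k n).d v := by
  refine Kt_le_of_tmul_ιMulti_mem (W := LinearMap.eqLocus (D t) (fock k n).d) (fun s m => ?_) hv
  rw [LinearMap.mem_eqLocus]
  obtain _ | t := t
  · rw [hD.1, d_tmul_ιMulti_zero, LinearMap.zero_apply]
  · rw [hD.2, d_tmul_ιMulti_succ]

theorem d_mul_of_mem_Kt {u : KK k n} (hu : u ∈ Kt k n t) (v : KK k n) :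
    (fock k n).d (u * v) = (fock k n).d u * v + (-1 : k) ^ t • (u * (fock k n).d v) := by
  let d := (fock k n).d
  exact Kt_le_of_tmul_ιMulti_mem (W := LinearMap.eqLocus (d ∘ₗ LinearMap.mulRight k v)
    (LinearMap.mulRight k v ∘ₗ d + (-1 : k) ^ t • LinearMap.mulRight k (d v)))
    (fun s m => d_tmul_ιMulti_mul t s m v) hu

end Grading

/-! ### The subalgebra generated by the `z_{a,b}` -/

section ZAlgebra

variable (k n) in
/-- The subalgebra `A` generated by the elements `z_{a,b}` for sequences of variables. -/
def zAlgebra : Subalgebra k (KK k n) :=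
  Algebra.adjoin k
    {v | ∃ (r : ℕ) (a : Fin (r + 1) → Fin n) (b : Fin r → Fin n), v = zvar a b}

theorem zvar_mem_zAlgebra {r : ℕ} (a : Fin (r + 1) → Fin n) (b : Fin r → Fin n) :
    zvar a b ∈ zAlgebra k n :=
  Algebra.subset_adjoin ⟨r, a, b, rfl⟩

theorem degreeProj_mem_zAlgebra (t : ℕ) {v : KK k n} (hv : v ∈ zAlgebra k n) :
    degreeProj t v ∈ zAlgebra k n := by
  suffices Subalgebra.toSubmodule (zAlgebra k n) ≤
      (Subalgebra.toSubmodule (zAlgebra k n)).comap (degreeProj t) from this hv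
  refine (Algebra.adjoin_eq_span k _).le.trans (Submodule.span_le.2 fun u hu => ?_)
  have homogeneous : ∃ r, u ∈ Kt k n r := by
    induction hu using Submonoid.closure_induction with
    | mem x hx =>
      obtain ⟨r, a, b, rfl⟩ := hx
      exact ⟨r, zvar_mem_Kt a b⟩
    | one => exact ⟨0, one_mem_Kt⟩
    | mul x y _ _ hx hy =>
      obtain ⟨r, hr⟩ := hx
      obtain ⟨s, hs⟩ := hy
      exact ⟨r + s, mul_mem_Kt hr hs⟩
  obtain ⟨r, hr⟩ := homogeneous
  rw [SetLike.mem_coe, Submodule.mem_comap]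
  obtain rfl | hrt := eq_or_ne r t
  · rw [degreeProj_of_mem_Kt hr]
    exact (Algebra.adjoin_eq_span k _).ge (Submodule.subset_span hu)
  · rw [degreeProj_of_mem_Kt_of_ne hrt hr]
    exact zero_mem _

variable [CharZero k]

theorem d_zvar_mul {r : ℕ} (a : Fin (r + 1) → Fin n) (b : Fin r → Fin n) (v : KK k n) :
    (fock k n).d (zvar a b * v) = (-1 : k) ^ r • (zvar a b * (fock k n).d v) := by
  rw [d_mul_of_mem_Kt (zvar_mem_Kt a b), d_zvar, zero_mul, zero_add]

theorem E_mem_zAlgebra (α β : Fin n) {v : KK k n} (hv : v ∈ zAlgebra k n) :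
    (fock k n).E α β v ∈ zAlgebra k n := by
  induction hv using Algebra.adjoin_induction with
  | mem x hx =>
    obtain ⟨r, a, b, rfl⟩ := hx
    rw [E_zvar]
    exact add_mem (sum_mem fun _ _ => Subalgebra.smul_mem _ (zvar_mem_zAlgebra _ _) _)
      (sum_mem fun _ _ => Subalgebra.smul_mem _ (zvar_mem_zAlgebra _ _) _)
  | algebraMap c =>
    rw [Algebra.algebraMap_eq_smul_one, map_smul, E_one, smul_zero]
    exact zero_mem _
  | add x y _ _ hx hy =>
    rw [map_add]
    exact add_mem hx hy
  | mul x y hx hy hEx hEy =>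
    rw [E_mul]
    exact add_mem (mul_mem hEx hy) (mul_mem hx hEy)

variable (k n) in
/-- The space `A + im d` of elements that are homologous to an element of `A`. -/
def zAlgebraAddBoundaries : Submodule k (KK k n) :=
  Subalgebra.toSubmodule (zAlgebra k n) ⊔ LinearMap.range (fock k n).d

theorem mem_zAlgebraAddBoundaries {v : KK k n} :
    v ∈ zAlgebraAddBoundaries k n ↔ ∃ u ∈ zAlgebra k n, ∃ w, u + (fock k n).d w = v := by
  simp [zAlgebraAddBoundaries, Submodule.mem_sup]

theorem E_mem_zAlgebraAddBoundaries (α β : Fin n) {v : KK k n}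
    (hv : v ∈ zAlgebraAddBoundaries k n) : (fock k n).E α β v ∈ zAlgebraAddBoundaries k n := by
  obtain ⟨u, hu, w, rfl⟩ := mem_zAlgebraAddBoundaries.1 hv
  exact mem_zAlgebraAddBoundaries.2 ⟨_, E_mem_zAlgebra α β hu, (fock k n).E α β w,
    by rw [map_add, FockSpace.E_d]⟩

theorem zvar_mul_mem_zAlgebraAddBoundaries {r : ℕ} (a : Fin (r + 1) → Fin n) (b : Fin r → Fin n)
    {v : KK k n} (hv : v ∈ zAlgebraAddBoundaries k n) :
    zvar a b * v ∈ zAlgebraAddBoundaries k n := by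
  obtain ⟨u, hu, w, rfl⟩ := mem_zAlgebraAddBoundaries.1 hv
  refine mem_zAlgebraAddBoundaries.2 ⟨_, mul_mem (zvar_mem_zAlgebra a b) hu,
    (-1 : k) ^ r • (zvar a b * w), ?_⟩
  rw [map_smul, d_zvar_mul, smul_smul, ← mul_pow, neg_one_mul, neg_neg, one_pow, one_smul, mul_add]

theorem liftsWedgeProds_zAlgebraAddBoundaries :
    (fock k n).LiftsWedgeProds (zAlgebraAddBoundaries k n) := by
  rintro y l p ⟨hp, dp⟩
  let z : KK k n := zvar (Fin.snoc (α := fun _ => Fin n) l.get y) fun _ => y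
  have z_mul_mem : z * p ∈ zAlgebraAddBoundaries k n ⊓ (fock k n).cycles := by
    refine ⟨zvar_mul_mem_zAlgebraAddBoundaries _ _ hp, FockSpace.mem_cycles.2 ?_⟩
    rw [d_zvar_mul, FockSpace.mem_cycles.1 dp, mul_zero, smul_zero]
  have multiple_mem := sub_mem (Submodule.mem_sup_left z_mul_mem)
    (Submodule.mem_sup_right (zvar_snoc_mul_sub_mem_sqIdeal y l p))
  rw [sub_sub_cancel, ← Nat.cast_smul_eq_nsmul k] at multiple_mem
  exact (Submodule.smul_mem_iff _
    (Nat.cast_ne_zero.2 (card_perm_fixing_last_ne_zero l.length))).1 multiple_mem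

theorem exists_mem_zAlgebra_add_d_eq {c : KK k n} (hc : (fock k n).d c = 0) :
    ∃ u ∈ zAlgebra k n, ∃ w, u + (fock k n).d w = c :=
  mem_zAlgebraAddBoundaries.1 <| FockSpace.cycles_le (W := zAlgebraAddBoundaries k n)
    (Submodule.mem_sup_left (one_mem (zAlgebra k n)))
    (fun w => Submodule.mem_sup_right ⟨w, rfl⟩)
    (fun α β _ => E_mem_zAlgebraAddBoundaries α β) liftsWedgeProds_zAlgebraAddBoundaries
    (FockSpace.mem_cycles.2 hc)

end ZAlgebra

end QuadraticKoszul

open QuadraticKoszul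

/-- Let `A ⊆ K` be the `k`-subalgebra of the Koszul complex generated by
all elements `z_{a,b}` over all `t ≥ 0` and all sequences `a`, `b` of variables, and let
`A_t = A ∩ K_t`.  Then every Koszul cycle `c ∈ ker(d_t)` can be written as
`c = u + d_{t+1}(w)` with `u ∈ A_t` and `w ∈ K_{t+1}`; i.e. the Koszul homology `H_*(𝔪²)`
is generated as a `k`-algebra by the classes of the `z_{a,b}`. -/
theorem koszul_homology_generated_by_zel (k : Type) [Field k] [CharZero k] (n : ℕ)
    (D : ℕ → KK k n →ₗ[k] KK k n) (hD : IsKoszulDiff D)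
    (t : ℕ) (c : KK k n) (hc : c ∈ Kt k n t) (hcyc : D t c = 0) :
    ∃ u w : KK k n,
      u ∈ Algebra.adjoin k {v : KK k n |
          ∃ (r : ℕ) (a : Fin (r+1) → Fin n) (b : Fin r → Fin n),
            v = zel r (fun l => (xv (a l) : S1 k n)) (fun l => xv (b l))} ∧
      u ∈ Kt k n t ∧ w ∈ Kt k n (t+1) ∧ c = u + D (t+1) w := by
  rw [koszulDiff_eq_d hD hc] at hcyc
  obtain ⟨u, hu, w, h⟩ := exists_mem_zAlgebra_add_d_eq hcyc
  refine ⟨degreeProj t u, degreeProj (t + 1) w, degreeProj_mem_zAlgebra t hu,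
    degreeProj_mem_Kt u, degreeProj_mem_Kt w, ?_⟩
  rw [koszulDiff_eq_d hD (degreeProj_mem_Kt w), ← degreeProj_d, ← map_add, h,
    degreeProj_of_mem_Kt hc]

end
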